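/- arXiv:1605.03995 — 2 statements merged into one kernel-verified Lean document; each statement's English description precedes it below -/
import Mathlib

section
/- For all ℓ, m ∈ Z/4, the k-dimension of Ext¹_D(k_{χ^m}, k_{χ^ℓ}) equals 1 if m ≡ ℓ+1 (mod 4) or m ≡ ℓ−1 (mod 4), and equals 0 otherwise. -/
open scoped TensorProduct

/-- Generators of the Drinfeld double `D = D(K^cop)`. -/
inductive DGen : Type
  | a | b | c | d | x | g

open FreeAlgebra in
/-- The defining relations of the algebra `D = D(K^cop)`. -/
inductive DRel (𝕜 : Type) [Field 𝕜] (ξ ν : 𝕜) :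
    FreeAlgebra 𝕜 DGen → FreeAlgebra 𝕜 DGen → Prop
  | ab : DRel 𝕜 ξ ν (ι 𝕜 DGen.a * ι 𝕜 DGen.b) (ξ • (ι 𝕜 DGen.b * ι 𝕜 DGen.a))
  | ac : DRel 𝕜 ξ ν (ι 𝕜 DGen.a * ι 𝕜 DGen.c) (ξ • (ι 𝕜 DGen.c * ι 𝕜 DGen.a))
  | cb : DRel 𝕜 ξ ν (ι 𝕜 DGen.c * ι 𝕜 DGen.b) 0
  | bc : DRel 𝕜 ξ ν (ι 𝕜 DGen.b * ι 𝕜 DGen.c) 0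
  | cd : DRel 𝕜 ξ ν (ι 𝕜 DGen.c * ι 𝕜 DGen.d) (ξ • (ι 𝕜 DGen.d * ι 𝕜 DGen.c))
  | bd : DRel 𝕜 ξ ν (ι 𝕜 DGen.b * ι 𝕜 DGen.d) (ξ • (ι 𝕜 DGen.d * ι 𝕜 DGen.b))
  | adcomm : DRel 𝕜 ξ ν (ι 𝕜 DGen.a * ι 𝕜 DGen.d) (ι 𝕜 DGen.d * ι 𝕜 DGen.a)
  | adone : DRel 𝕜 ξ ν (ι 𝕜 DGen.a * ι 𝕜 DGen.d) 1
  | bsq : DRel 𝕜 ξ ν (ι 𝕜 DGen.b * ι 𝕜 DGen.b) 0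
  | csq : DRel 𝕜 ξ ν (ι 𝕜 DGen.c * ι 𝕜 DGen.c) 0
  | aac : DRel 𝕜 ξ ν (ι 𝕜 DGen.a * ι 𝕜 DGen.a * ι 𝕜 DGen.c) (ι 𝕜 DGen.b)
  | afour : DRel 𝕜 ξ ν (ι 𝕜 DGen.a ^ 4) 1
  | gfour : DRel 𝕜 ξ ν (ι 𝕜 DGen.g ^ 4) 1
  | xsq : DRel 𝕜 ξ ν (ι 𝕜 DGen.x * ι 𝕜 DGen.x) (ι 𝕜 DGen.g * ι 𝕜 DGen.g - 1)
  | gx : DRel 𝕜 ξ ν (ι 𝕜 DGen.g * ι 𝕜 DGen.x) (-(ι 𝕜 DGen.x * ι 𝕜 DGen.g))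
  | ag : DRel 𝕜 ξ ν (ι 𝕜 DGen.a * ι 𝕜 DGen.g) (ι 𝕜 DGen.g * ι 𝕜 DGen.a)
  | bg : DRel 𝕜 ξ ν (ι 𝕜 DGen.b * ι 𝕜 DGen.g) (-(ι 𝕜 DGen.g * ι 𝕜 DGen.b))
  | cg : DRel 𝕜 ξ ν (ι 𝕜 DGen.c * ι 𝕜 DGen.g) (-(ι 𝕜 DGen.g * ι 𝕜 DGen.c))
  | dg : DRel 𝕜 ξ ν (ι 𝕜 DGen.d * ι 𝕜 DGen.g) (ι 𝕜 DGen.g * ι 𝕜 DGen.d)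
  | axr : DRel 𝕜 ξ ν (ι 𝕜 DGen.a * ι 𝕜 DGen.x)
      ((ν * ξ) • (ι 𝕜 DGen.b + ι 𝕜 DGen.g * ι 𝕜 DGen.c) - ξ • (ι 𝕜 DGen.x * ι 𝕜 DGen.a))
  | bxr : DRel 𝕜 ξ ν (ι 𝕜 DGen.b * ι 𝕜 DGen.x)
      ((ν * ξ) • (ι 𝕜 DGen.a - ι 𝕜 DGen.g * ι 𝕜 DGen.d) + ξ • (ι 𝕜 DGen.x * ι 𝕜 DGen.b))
  | cxr : DRel 𝕜 ξ ν (ι 𝕜 DGen.c * ι 𝕜 DGen.x)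
      ((ν * ξ) • (ι 𝕜 DGen.d - ι 𝕜 DGen.g * ι 𝕜 DGen.a) - ξ • (ι 𝕜 DGen.x * ι 𝕜 DGen.c))
  | dxr : DRel 𝕜 ξ ν (ι 𝕜 DGen.d * ι 𝕜 DGen.x)
      ((ν * ξ) • (ι 𝕜 DGen.c + ι 𝕜 DGen.g * ι 𝕜 DGen.b) + ξ • (ι 𝕜 DGen.x * ι 𝕜 DGen.d))

/-- The Drinfeld double `D = D(K^cop)`, presented by generators and relations. -/
abbrev DAlg (𝕜 : Type) [Field 𝕜] (ξ ν : 𝕜) : Type := RingQuot (DRel 𝕜 ξ ν)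

variable (𝕜 : Type) [Field 𝕜] (ξ ν : 𝕜)

/-- The generator `a` of `D`. -/
noncomputable def gA : DAlg 𝕜 ξ ν := RingQuot.mkAlgHom 𝕜 (DRel 𝕜 ξ ν) (FreeAlgebra.ι 𝕜 DGen.a)
/-- The generator `b` of `D`. -/
noncomputable def gB : DAlg 𝕜 ξ ν := RingQuot.mkAlgHom 𝕜 (DRel 𝕜 ξ ν) (FreeAlgebra.ι 𝕜 DGen.b)
/-- The generator `c` of `D`. -/
noncomputable def gC : DAlg 𝕜 ξ ν := RingQuot.mkAlgHom 𝕜 (DRel 𝕜 ξ ν) (FreeAlgebra.ι 𝕜 DGen.c)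
/-- The generator `d` of `D`. -/
noncomputable def gD : DAlg 𝕜 ξ ν := RingQuot.mkAlgHom 𝕜 (DRel 𝕜 ξ ν) (FreeAlgebra.ι 𝕜 DGen.d)
/-- The generator `x` of `D`. -/
noncomputable def gX : DAlg 𝕜 ξ ν := RingQuot.mkAlgHom 𝕜 (DRel 𝕜 ξ ν) (FreeAlgebra.ι 𝕜 DGen.x)
/-- The generator `g` of `D`. -/
noncomputable def gG : DAlg 𝕜 ξ ν := RingQuot.mkAlgHom 𝕜 (DRel 𝕜 ξ ν) (FreeAlgebra.ι 𝕜 DGen.g)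

variable {𝕜 ξ ν}
variable {V W : Type} [AddCommGroup V] [Module 𝕜 V] [AddCommGroup W] [Module 𝕜 W]

/-- A `𝕜`-subspace is invariant under a representation of `D`. -/
def DInvariant (ρ : DAlg 𝕜 ξ ν →ₐ[𝕜] Module.End 𝕜 V) (U : Submodule 𝕜 V) : Prop :=
  ∀ z : DAlg 𝕜 ξ ν, ∀ w ∈ U, ρ z w ∈ U

/-- A representation of `D` is simple (the corresponding `D`-module is simple). -/
def DSimpleRep (ρ : DAlg 𝕜 ξ ν →ₐ[𝕜] Module.End 𝕜 V) : Prop :=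
  Nontrivial V ∧ ∀ U : Submodule 𝕜 V, DInvariant ρ U → U = ⊥ ∨ U = ⊤

/-- A representation of `D` is indecomposable. -/
def DIndecRep (ρ : DAlg 𝕜 ξ ν →ₐ[𝕜] Module.End 𝕜 V) : Prop :=
  Nontrivial V ∧ ∀ U₁ U₂ : Submodule 𝕜 V, DInvariant ρ U₁ → DInvariant ρ U₂ →
    IsCompl U₁ U₂ → U₁ = ⊥ ∨ U₂ = ⊥

/-- The vector `v` spans a copy of the character `χ^j` inside a representation of `D`:
the generators act on `v` by the scalars `χ^j(a) = ξ^j`, `χ^j(b) = χ^j(c) = χ^j(x) = 0`,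
`χ^j(d) = ξ^{-j}`, `χ^j(g) = (-1)^j`. -/
def ChiOn (ρ : DAlg 𝕜 ξ ν →ₐ[𝕜] Module.End 𝕜 V) (j : ZMod 4) (v : V) : Prop :=
  ρ (gA 𝕜 ξ ν) v = ξ ^ j.val • v ∧ ρ (gB 𝕜 ξ ν) v = 0 ∧ ρ (gC 𝕜 ξ ν) v = 0 ∧
  ρ (gD 𝕜 ξ ν) v = (ξ ^ j.val)⁻¹ • v ∧ ρ (gX 𝕜 ξ ν) v = 0 ∧
  ρ (gG 𝕜 ξ ν) v = (-1 : 𝕜) ^ j.val • v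

/-- The pair `(e₁, e₂)` realizes the defining action of the module `V_{i,j}`. -/
def VijOn (ρ : DAlg 𝕜 ξ ν →ₐ[𝕜] Module.End 𝕜 V) (i j : ZMod 4) (e₁ e₂ : V) : Prop :=
  ρ (gA 𝕜 ξ ν) e₁ = ξ ^ i.val • e₁ ∧ ρ (gA 𝕜 ξ ν) e₂ = ξ ^ (i.val + 3) • e₂ ∧
  ρ (gB 𝕜 ξ ν) e₁ = 0 ∧ ρ (gB 𝕜 ξ ν) e₂ = (-1 : 𝕜) ^ i.val • e₁ ∧
  ρ (gC 𝕜 ξ ν) e₁ = 0 ∧ ρ (gC 𝕜 ξ ν) e₂ = e₁ ∧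
  ρ (gD 𝕜 ξ ν) e₁ = (ξ ^ i.val)⁻¹ • e₁ ∧ ρ (gD 𝕜 ξ ν) e₂ = (ξ * (ξ ^ i.val)⁻¹) • e₂ ∧
  ρ (gG 𝕜 ξ ν) e₁ = ξ ^ j.val • e₁ ∧ ρ (gG 𝕜 ξ ν) e₂ = ξ ^ (j.val + 2) • e₂ ∧
  ρ (gX 𝕜 ξ ν) e₁ = (ν * ξ * (ξ ^ (3 * i.val) - ξ ^ (i.val + j.val))) • e₂ ∧
  ρ (gX 𝕜 ξ ν) e₂ = (ν * ξ / 2 * (ξ ^ i.val + ξ ^ (3 * i.val + j.val))) • e₁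

/-- The tuple `p` realizes the defining action of the module `P(ℓ) = P ⊗ k_{χ^ℓ}`
(`P = P(0)` being the projective cover of the trivial module). -/
def POn (ρ : DAlg 𝕜 ξ ν →ₐ[𝕜] Module.End 𝕜 V) (ℓ : ZMod 4) (p : Fin 4 → V) : Prop :=
  ρ (gA 𝕜 ξ ν) (p 0) = ξ ^ ℓ.val • p 0 ∧ ρ (gA 𝕜 ξ ν) (p 1) = -(ξ ^ (ℓ.val + 1)) • p 1 ∧
  ρ (gA 𝕜 ξ ν) (p 2) = ξ ^ (ℓ.val + 1) • p 2 ∧ ρ (gA 𝕜 ξ ν) (p 3) = ξ ^ ℓ.val • p 3 ∧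
  ρ (gB 𝕜 ξ ν) (p 0) = ξ ^ ℓ.val • p 2 ∧ ρ (gB 𝕜 ξ ν) (p 1) = ξ ^ (ℓ.val + 1) • p 3 ∧
  ρ (gB 𝕜 ξ ν) (p 2) = 0 ∧ ρ (gB 𝕜 ξ ν) (p 3) = 0 ∧
  ρ (gC 𝕜 ξ ν) (p 0) = -((ξ ^ ℓ.val)⁻¹) • p 2 ∧
  ρ (gC 𝕜 ξ ν) (p 1) = (ξ * (ξ ^ ℓ.val)⁻¹) • p 3 ∧
  ρ (gC 𝕜 ξ ν) (p 2) = 0 ∧ ρ (gC 𝕜 ξ ν) (p 3) = 0 ∧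
  ρ (gD 𝕜 ξ ν) (p 0) = (ξ ^ ℓ.val)⁻¹ • p 0 ∧
  ρ (gD 𝕜 ξ ν) (p 1) = (ξ * (ξ ^ ℓ.val)⁻¹) • p 1 ∧
  ρ (gD 𝕜 ξ ν) (p 2) = -(ξ * (ξ ^ ℓ.val)⁻¹) • p 2 ∧
  ρ (gD 𝕜 ξ ν) (p 3) = (ξ ^ ℓ.val)⁻¹ • p 3 ∧
  ρ (gX 𝕜 ξ ν) (p 0) = p 1 + ν • p 2 ∧ ρ (gX 𝕜 ξ ν) (p 1) = -(ν • p 3) ∧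
  ρ (gX 𝕜 ξ ν) (p 2) = p 3 ∧ ρ (gX 𝕜 ξ ν) (p 3) = 0 ∧
  ρ (gG 𝕜 ξ ν) (p 0) = (-1 : 𝕜) ^ ℓ.val • p 0 ∧
  ρ (gG 𝕜 ξ ν) (p 1) = -((-1 : 𝕜) ^ ℓ.val) • p 1 ∧
  ρ (gG 𝕜 ξ ν) (p 2) = -((-1 : 𝕜) ^ ℓ.val) • p 2 ∧
  ρ (gG 𝕜 ξ ν) (p 3) = (-1 : 𝕜) ^ ℓ.val • p 3

/-- `ρT` is the tensor product representation of `ρM` and `ρN` on `M ⊗ N`, where the action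
of `D` on a tensor product is given through the coproduct of the Drinfeld double:
`a ↦ a⊗a + c⊗b`, `b ↦ b⊗a + d⊗b`, `c ↦ a⊗c + c⊗d`, `d ↦ b⊗c + d⊗d`, `g ↦ g⊗g`,
`x ↦ x⊗1 + g⊗x`. -/
def TensorRepOn (ρM : DAlg 𝕜 ξ ν →ₐ[𝕜] Module.End 𝕜 V) (ρN : DAlg 𝕜 ξ ν →ₐ[𝕜] Module.End 𝕜 W)
    (ρT : DAlg 𝕜 ξ ν →ₐ[𝕜] Module.End 𝕜 (V ⊗[𝕜] W)) : Prop :=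
  ρT (gA 𝕜 ξ ν) = TensorProduct.map (ρM (gA 𝕜 ξ ν)) (ρN (gA 𝕜 ξ ν)) +
      TensorProduct.map (ρM (gC 𝕜 ξ ν)) (ρN (gB 𝕜 ξ ν)) ∧
  ρT (gB 𝕜 ξ ν) = TensorProduct.map (ρM (gB 𝕜 ξ ν)) (ρN (gA 𝕜 ξ ν)) +
      TensorProduct.map (ρM (gD 𝕜 ξ ν)) (ρN (gB 𝕜 ξ ν)) ∧
  ρT (gC 𝕜 ξ ν) = TensorProduct.map (ρM (gA 𝕜 ξ ν)) (ρN (gC 𝕜 ξ ν)) +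
      TensorProduct.map (ρM (gC 𝕜 ξ ν)) (ρN (gD 𝕜 ξ ν)) ∧
  ρT (gD 𝕜 ξ ν) = TensorProduct.map (ρM (gB 𝕜 ξ ν)) (ρN (gC 𝕜 ξ ν)) +
      TensorProduct.map (ρM (gD 𝕜 ξ ν)) (ρN (gD 𝕜 ξ ν)) ∧
  ρT (gG 𝕜 ξ ν) = TensorProduct.map (ρM (gG 𝕜 ξ ν)) (ρN (gG 𝕜 ξ ν)) ∧
  ρT (gX 𝕜 ξ ν) = TensorProduct.map (ρM (gX 𝕜 ξ ν)) LinearMap.id +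
      TensorProduct.map (ρM (gG 𝕜 ξ ν)) (ρN (gX 𝕜 ξ ν))

/-- `f` is the character `χ^j` of `D`. -/
def IsChi (𝕜 : Type) [Field 𝕜] (ξ ν : 𝕜) (f : DAlg 𝕜 ξ ν →ₐ[𝕜] 𝕜) (j : ZMod 4) : Prop :=
  f (gA 𝕜 ξ ν) = ξ ^ j.val ∧ f (gB 𝕜 ξ ν) = 0 ∧ f (gC 𝕜 ξ ν) = 0 ∧
  f (gD 𝕜 ξ ν) = (ξ ^ j.val)⁻¹ ∧ f (gX 𝕜 ξ ν) = 0 ∧ f (gG 𝕜 ξ ν) = (-1 : 𝕜) ^ j.val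

/-- The 1-dimensional left `D`-module `𝕜_{χ}` determined by a character
`χ : D →ₐ[𝕜] 𝕜`, as an object of `ModuleCat D`. -/
noncomputable def chiModuleCat (𝕜 : Type) [Field 𝕜] (ξ ν : 𝕜)
    (f : DAlg 𝕜 ξ ν →ₐ[𝕜] 𝕜) : ModuleCat (DAlg 𝕜 ξ ν) :=
  @ModuleCat.of (DAlg 𝕜 ξ ν) _ 𝕜 _ (Module.compHom 𝕜 f.toRingHom)

/-!
For characters `χ`, `ψ` of an algebra `A`, the presentation `0 ⟶ ker ψ ⟶ A ⟶ k_ψ ⟶ 0` identifies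
`Ext¹(k_ψ, k_χ)` with the linear forms `δ` satisfying `δ(uv) = χ(u)δ(v) + δ(u)ψ(v)`, modulo the
multiples of `χ - ψ`. For the algebra `D`, such a `δ` is a multiple of `χ - ψ` if and only if
`δ(x) = 0`: subtracting a multiple makes `δ(a) = 0`, and then the relations determine the values
of `δ` at the remaining generators from `δ(x)`. The value `δ(x)` is constrained only by
`gx = -xg`, which says `(χ(g) + ψ(g))δ(x) = 0`. For `χ = χ^ℓ` and `ψ = χ^m` the factor
`(-1)^ℓ + (-1)^m` vanishes exactly when `ℓ` and `m` have different parity.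
-/

/-! ### Dimension shifting for Ext¹ -/

section Presentation

open CategoryTheory Opposite

universe v u
variable {C : Type u} [Category.{v} C] [Abelian C]

/-- The augmentation `Q₀ ⟶ X` of a projective resolution `Q` of `X`. -/
noncomputable def augmentation {X : C} (Q : ProjectiveResolution X) : Q.complex.X 0 ⟶ X :=
  (ChainComplex.toSingle₀Equiv Q.complex X Q.π).1

theorem d_comp_augmentation {X : C} (Q : ProjectiveResolution X) :
    Q.complex.d 1 0 ≫ augmentation Q = 0 :=
  (ChainComplex.toSingle₀Equiv Q.complex X Q.π).2

theorem augmentation_exact {X : C} (Q : ProjectiveResolution X) :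
    (ShortComplex.mk _ _ (d_comp_augmentation Q)).Exact :=
  Q.exact₀

instance epi_augmentation {X : C} (Q : ProjectiveResolution X) : Epi (augmentation Q) :=
  inferInstanceAs (Epi (Q.π.f 0))

variable {S : ShortComplex C}

/-- The complex `⋯ ⟶ Q₁ ⟶ Q₀ ⟶ S.X₂` obtained by splicing a resolution `Q` of `S.X₁` with the
monomorphism of a short exact sequence `S`; its degree `n + 1` is the degree `n` of `Q`. -/
noncomputable def spliceComplex (S : ShortComplex C) (Q : ProjectiveResolution S.X₁) :
    ChainComplex C ℕ :=
  Q.complex.augment (augmentation Q ≫ S.f) (by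
    rw [← Category.assoc, d_comp_augmentation, Limits.zero_comp])

theorem spliceComplex_exactAt_succ (hS : S.ShortExact) (Q : ProjectiveResolution S.X₁) (n : ℕ) :
    (spliceComplex S Q).ExactAt (n + 1) := by
  rw [HomologicalComplex.exactAt_iff' _ (n + 2) (n + 1) n (by simp) (by simp)]
  cases n with
  | zero =>
    let φ : ShortComplex.mk _ _ (d_comp_augmentation Q) ⟶ (spliceComplex S Q).sc' 2 1 0 :=
      { τ₁ := 𝟙 _
        τ₂ := 𝟙 _
        τ₃ := S.f
        comm₁₂ := (Category.id_comp _).trans (Category.comp_id _).symm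
        comm₂₃ := Category.id_comp _ }
    have : Epi φ.τ₁ := inferInstanceAs (Epi (𝟙 _))
    have : IsIso φ.τ₂ := inferInstanceAs (IsIso (𝟙 _))
    have : Mono φ.τ₃ := hS.mono_f
    exact (ShortComplex.exact_iff_of_epi_of_isIso_of_mono φ).1 (augmentation_exact Q)
  | succ n => exact Q.exact_succ n

theorem splice_comp (Q : ProjectiveResolution S.X₁) : (augmentation Q ≫ S.f) ≫ S.g = 0 := by
  rw [Category.assoc, S.zero, Limits.comp_zero]

theorem splice_exact_zero (hS : S.ShortExact) (Q : ProjectiveResolution S.X₁) :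
    (ShortComplex.mk _ _ (splice_comp Q)).Exact := by
  let φ : ShortComplex.mk _ _ (splice_comp Q) ⟶ S :=
    { τ₁ := augmentation Q
      τ₂ := 𝟙 _
      τ₃ := 𝟙 _ }
  have : Epi φ.τ₁ := epi_augmentation Q
  have : IsIso φ.τ₂ := inferInstanceAs (IsIso (𝟙 _))
  have : Mono φ.τ₃ := inferInstanceAs (Mono (𝟙 _))
  exact (ShortComplex.exact_iff_of_epi_of_isIso_of_mono φ).2 hS.exact

/-- The augmentation of the spliced complex, given by `S.g` in degree zero. -/
noncomputable def spliceAugmentation (Q : ProjectiveResolution S.X₁) :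
    spliceComplex S Q ⟶ (ChainComplex.single₀ C).obj S.X₃ :=
  (ChainComplex.toSingle₀Equiv _ _).symm ⟨S.g, splice_comp Q⟩

theorem spliceAugmentation_f_zero (Q : ProjectiveResolution S.X₁) :
    (spliceAugmentation Q).f 0 = S.g :=
  ChainComplex.toSingle₀Equiv_symm_apply_f_zero (C := spliceComplex S Q) _ _

/-- The spliced complex as a projective resolution of the quotient of a short exact sequence with
projective middle term. -/
noncomputable def spliceResolution (hS : S.ShortExact) [Projective S.X₂]
    (Q : ProjectiveResolution S.X₁) : ProjectiveResolution S.X₃ where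
  complex := spliceComplex S Q
  projective
    | 0 => inferInstanceAs (Projective S.X₂)
    | n + 1 => Q.projective n
  π := spliceAugmentation Q
  quasiIso := ⟨fun
    | 0 => by
      rw [ChainComplex.quasiIsoAt₀_iff, ShortComplex.quasiIso_iff_of_zeros' _ rfl rfl rfl]
      refine (ShortComplex.exact_and_epi_g_iff_of_iso (S₁ := .mk _ _ (splice_comp Q)) ?_).1
        ⟨splice_exact_zero hS Q, hS.epi_g⟩
      exact ShortComplex.isoMk (Iso.refl _) (Iso.refl _) (Iso.refl _)
        ((Category.id_comp _).trans (Category.comp_id _).symm)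
        ((Category.id_comp _).trans
          ((spliceAugmentation_f_zero Q).trans (Category.comp_id _).symm))
    | n + 1 => by
      rw [quasiIsoAt_iff_exactAt' _ _ (ChainComplex.exactAt_succ_single_obj _ _)]
      exact spliceComplex_exactAt_succ hS Q n⟩

variable {R : Type*} [Ring R] [Linear R C]

/-- The 1-cocycle `Q₀ ⟶ S.X₁ ⟶ Y` of the spliced resolution attached to a morphism `S.X₁ ⟶ Y`. -/
noncomputable def cocycleOfHom (S : ShortComplex C) (Q : ProjectiveResolution S.X₁) (Y : C) :
    (S.X₁ ⟶ Y) →ₗ[R]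
      LinearMap.ker (((spliceComplex S Q).linearYonedaObj R Y).sc' 0 1 2).g.hom :=
  (Linear.leftComp R Y (augmentation Q)).codRestrict _ fun φ => by
    change Q.complex.d 1 0 ≫ augmentation Q ≫ φ = 0
    rw [← Category.assoc, d_comp_augmentation, Limits.zero_comp]

theorem cocycleOfHom_bijective (S : ShortComplex C) (Q : ProjectiveResolution S.X₁) (Y : C) :
    Function.Bijective (cocycleOfHom (R := R) S Q Y) := by
  constructor
  · intro φ ψ h
    exact (cancel_epi (augmentation Q)).1 (congrArg Subtype.val h)
  · rintro ⟨ψ, hψ⟩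
    have : Epi (ShortComplex.mk _ _ (d_comp_augmentation Q)).g := epi_augmentation Q
    exact ⟨(augmentation_exact Q).desc ψ hψ, Subtype.ext ((augmentation_exact Q).g_desc ψ hψ)⟩

theorem map_cocycleOfHom_range (S : ShortComplex C) (Q : ProjectiveResolution S.X₁) (Y : C) :
    (LinearMap.range (Linear.leftComp R Y S.f)).map (cocycleOfHom S Q Y) =
      LinearMap.range (((spliceComplex S Q).linearYonedaObj R Y).sc' 0 1 2).moduleCatToCycles := by
  rw [← LinearMap.range_comp]
  exact congrArg LinearMap.range
    (LinearMap.ext fun φ => Subtype.ext (Category.assoc _ _ _).symm)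

/-- Dimension shifting: for a short exact sequence with projective middle term, `Ext¹(S.X₃, Y)` is
the cokernel of restriction `Hom(S.X₂, Y) ⟶ Hom(S.X₁, Y)`. -/
noncomputable def extOneEquivOfShortExact [EnoughProjectives C] (hS : S.ShortExact)
    [Projective S.X₂] (Y : C) :
    ((Ext R C 1).obj (op S.X₃)).obj Y ≃ₗ[R]
      (S.X₁ ⟶ Y) ⧸ LinearMap.range (Linear.leftComp R Y S.f) :=
  let Q := projectiveResolution S.X₁
  let P := spliceResolution hS Q
  let K := P.complex.linearYonedaObj R Y
  (P.isoExt 1 Y ≪≫ ShortComplex.homologyMapIso (K.isoSc' 0 1 2 (by simp) (by simp)) ≪≫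
    (K.sc' 0 1 2).moduleCatHomologyIso).toLinearEquiv ≪≫ₗ
  (Submodule.Quotient.equiv _ _ (LinearEquiv.ofBijective _ (cocycleOfHom_bijective S Q Y))
    (map_cocycleOfHom_range S Q Y)).symm

end Presentation

/-! ### Skew derivations -/

section SkewDerivation

variable {k A : Type*} [CommRing k] [Ring A] [Algebra k A]

/-- The `(f, g)`-skew derivations, i.e. the derivations into the bimodule `k` on which `A` acts on
the left through `f` and on the right through `g`. -/
def skewDerivation (f g : A →ₐ[k] k) : Submodule k (A →ₗ[k] k) where
  carrier := {δ | ∀ u v, δ (u * v) = f u * δ v + δ u * g v}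
  zero_mem' u v := by simp
  add_mem' hδ hδ' u v := by
    simp only [LinearMap.add_apply, hδ u v, hδ' u v]
    ring
  smul_mem' t δ hδ u v := by
    simp only [LinearMap.smul_apply, smul_eq_mul, hδ u v]
    ring

variable {f g : A →ₐ[k] k}

theorem apply_one_of_mem_skewDerivation {δ : A →ₗ[k] k} (hδ : δ ∈ skewDerivation f g) :
    δ 1 = 0 := by
  simpa using hδ 1 1

theorem apply_algebraMap_of_mem_skewDerivation {δ : A →ₗ[k] k} (hδ : δ ∈ skewDerivation f g)
    (t : k) : δ (algebraMap k A t) = 0 := by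
  rw [Algebra.algebraMap_eq_smul_one, map_smul, apply_one_of_mem_skewDerivation hδ, smul_zero]

theorem sub_mem_skewDerivation (f g : A →ₐ[k] k) :
    f.toLinearMap - g.toLinearMap ∈ skewDerivation f g := fun u v => by
  simp only [LinearMap.sub_apply, AlgHom.toLinearMap_apply, map_mul]
  ring

/-- The inner skew derivations: the multiples of `f - g`. -/
def innerSkewDerivation (f g : A →ₐ[k] k) : Submodule k (skewDerivation f g) :=
  Submodule.span k {⟨_, sub_mem_skewDerivation f g⟩}

theorem mem_innerSkewDerivation {δ : skewDerivation f g} :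
    δ ∈ innerSkewDerivation f g ↔ ∃ t : k, ∀ u, δ.1 u = t * (f u - g u) := by
  rw [innerSkewDerivation, Submodule.mem_span_singleton]
  refine exists_congr fun t => ⟨?_, fun h => Subtype.ext (LinearMap.ext fun u => (h u).symm)⟩
  rintro rfl u
  rfl

/-- Evaluation of skew derivations at an element of the algebra. -/
def skewDerivationEval (f g : A →ₐ[k] k) (x : A) : skewDerivation f g →ₗ[k] k :=
  (LinearMap.applyₗ x).comp (skewDerivation f g).subtype

end SkewDerivation

/-! ### Extensions of one-dimensional modules -/

section ExtCharacters

open CategoryTheory Opposite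

universe u
variable {k A : Type u} [Field k] [Ring A] [Algebra k A]

/-- The one-dimensional left module `k_f` on which `A` acts through the character `f`. -/
noncomputable def charModule (f : A →ₐ[k] k) : ModuleCat.{u} A :=
  @ModuleCat.of A _ k _ (Module.compHom k f.toRingHom)

section Functional

variable {M : Type u} [AddCommGroup M] [Module A M] {f : A →ₐ[k] k}

/-- An additive functional that is equivariant for the character `f`, as a morphism to `k_f`. -/
noncomputable def homOfFunctional (φ : M →+ k) (hφ : ∀ (a : A) m, φ (a • m) = f a * φ m) :
    ModuleCat.of A M ⟶ charModule f :=
  letI := Module.compHom k f.toRingHom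
  ModuleCat.ofHom { toFun := φ, map_add' := φ.map_add, map_smul' := hφ }

/-- The additive functional underlying a morphism to `k_f`. -/
noncomputable def functionalOfHom (φ : ModuleCat.of A M ⟶ charModule f) : M →+ k :=
  φ.hom.toAddMonoidHom

theorem functionalOfHom_smul (φ : ModuleCat.of A M ⟶ charModule f) (a : A) (m : M) :
    functionalOfHom φ (a • m) = f a * functionalOfHom φ m :=
  φ.hom.map_smul a m

end Functional

/-- The presentation `0 ⟶ ker g ⟶ A ⟶ k_g ⟶ 0` of the one-dimensional module `k_g`. -/
noncomputable abbrev charPresentation (g : A →ₐ[k] k) : ShortComplex (ModuleCat.{u} A) where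
  X₁ := ModuleCat.of A (RingHom.ker g)
  X₂ := ModuleCat.of A A
  X₃ := charModule g
  f := ModuleCat.ofHom (RingHom.ker g).subtype
  g := homOfFunctional (g : A →+ k) (map_mul g)
  zero := ModuleCat.hom_ext (LinearMap.ext fun z => z.2)

instance projective_charPresentation_X₂ (g : A →ₐ[k] k) :
    Projective (charPresentation g).X₂ :=
  ModuleCat.projective_of_free (M := ModuleCat.of A A) (Module.Basis.singleton PUnit.{1} A)

theorem charPresentation_shortExact (g : A →ₐ[k] k) : (charPresentation g).ShortExact where
  exact := (ShortComplex.moduleCat_exact_iff _).2 fun u hu => ⟨⟨u, hu⟩, rfl⟩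
  mono_f := (ModuleCat.mono_iff_injective _).2 Subtype.val_injective
  epi_g := (ModuleCat.epi_iff_surjective _).2 fun t => ⟨algebraMap k A t, g.commutes t⟩

/-- The projection `u ↦ u - g u` of `A` onto `ker g` along the scalars. -/
noncomputable def kerProjection (g : A →ₐ[k] k) : A →ₗ[k] RingHom.ker g :=
  (LinearMap.id - (Algebra.linearMap k A).comp g.toLinearMap).codRestrict
    ((RingHom.ker g).restrictScalars k) fun u => by simp [RingHom.mem_ker]

theorem coe_kerProjection (g : A →ₐ[k] k) (u : A) :
    (kerProjection g u : A) = u - algebraMap k A (g u) :=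
  rfl

theorem kerProjection_mul (g : A →ₐ[k] k) (u v : A) :
    kerProjection g (u * v) =
      u • kerProjection g v + algebraMap k A (g v) • kerProjection g u :=
  Subtype.ext <| by
    simp only [Submodule.coe_add, Submodule.coe_smul, coe_kerProjection, smul_eq_mul, map_mul,
      mul_sub, sub_mul, Algebra.commutes (g v)]
    abel

theorem kerProjection_coe (g : A →ₐ[k] k) (z : RingHom.ker g) : kerProjection g z = z :=
  Subtype.ext (by rw [coe_kerProjection, (z.2 : g z = 0), map_zero, sub_zero])

/-- The skew derivation `u ↦ φ (u - g u)` attached to a morphism `φ : ker g ⟶ k_f`. -/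
noncomputable def skewDerivationOfHom {f g : A →ₐ[k] k}
    (φ : ModuleCat.of A (RingHom.ker g) ⟶ charModule f) : skewDerivation f g where
  val :=
    { toFun := fun u => functionalOfHom φ (kerProjection g u)
      map_add' := fun u v => by rw [map_add, map_add]
      map_smul' := fun t u => by
        rw [map_smul, ← algebraMap_smul A t (kerProjection g u), functionalOfHom_smul, f.commutes]
        rfl }
  property := fun u v => by
    change functionalOfHom φ _ = f u * functionalOfHom φ _ + functionalOfHom φ _ * g v
    rw [kerProjection_mul, map_add, functionalOfHom_smul, functionalOfHom_smul, f.commutes]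
    exact congrArg _ (mul_comm _ _)

/-- The restriction of a skew derivation to `ker g`, as a morphism to `k_f`. -/
noncomputable def homOfSkewDerivation {f g : A →ₐ[k] k} (δ : skewDerivation f g) :
    ModuleCat.of A (RingHom.ker g) ⟶ charModule f :=
  homOfFunctional (δ.1.toAddMonoidHom.comp (RingHom.ker g).subtype.toAddMonoidHom) fun a z => by
    have hz : g z = 0 := z.2
    simpa [hz] using δ.2 a z

/-- Morphisms `ker g ⟶ k_f` are the same as `(f, g)`-skew derivations. -/
noncomputable def homKerEquivSkewDerivation (f g : A →ₐ[k] k) :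
    (ModuleCat.of A (RingHom.ker g) ⟶ charModule f) ≃ₗ[k] skewDerivation f g where
  toFun := skewDerivationOfHom
  map_add' _ _ := rfl
  map_smul' t φ := Subtype.ext <| LinearMap.ext fun u =>
    congrArg (· * (skewDerivationOfHom φ).1 u) (f.commutes t)
  invFun := homOfSkewDerivation
  left_inv φ := ModuleCat.hom_ext <| LinearMap.ext fun z =>
    congrArg φ.hom (kerProjection_coe g z)
  right_inv δ := Subtype.ext <| LinearMap.ext fun u => by
    change δ.1 (u - algebraMap k A (g u)) = _
    rw [map_sub, apply_algebraMap_of_mem_skewDerivation δ.2, sub_zero]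

theorem range_leftComp_charPresentation (f g : A →ₐ[k] k) :
    LinearMap.range (Linear.leftComp k (charModule f) (charPresentation g).f) =
      (innerSkewDerivation f g).comap (homKerEquivSkewDerivation f g).toLinearMap := by
  ext φ
  rw [Submodule.mem_comap, mem_innerSkewDerivation]
  constructor
  · rintro ⟨ψ, rfl⟩
    refine ⟨functionalOfHom ψ (1 : A), fun u => ?_⟩
    change functionalOfHom ψ (u - algebraMap k A (g u)) = _
    have hψ (u : A) : functionalOfHom ψ u = f u * functionalOfHom ψ (1 : A) := by
      rw [← functionalOfHom_smul, smul_eq_mul, mul_one]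
    rw [hψ, map_sub, f.commutes, Algebra.algebraMap_self_apply, mul_comm]
  · rintro ⟨t, ht⟩
    refine ⟨homOfFunctional ((AddMonoidHom.mulRight t).comp (f : A →+ k)) fun u v => ?_,
      (homKerEquivSkewDerivation f g).injective <| Subtype.ext <| LinearMap.ext fun u => ?_⟩
    · simp [mul_assoc]
    · refine Eq.trans ?_ (ht u).symm
      change f (u - algebraMap k A (g u)) * t = _
      rw [map_sub, f.commutes, Algebra.algebraMap_self_apply, mul_comm]

/-- `Ext¹(k_g, k_f)` is the space of skew derivations modulo the inner ones. The quotient is encoded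
as the range of any linear map `Φ` whose kernel consists of the inner skew derivations. -/
noncomputable def extOneEquivRange (f g : A →ₐ[k] k) {N : Type*} [AddCommGroup N] [Module k N]
    (Φ : skewDerivation f g →ₗ[k] N) (hΦ : LinearMap.ker Φ = innerSkewDerivation f g) :
    ((Ext k (ModuleCat.{u} A) 1).obj (op (charModule g))).obj (charModule f) ≃ₗ[k]
      LinearMap.range Φ :=
  extOneEquivOfShortExact (charPresentation_shortExact g) (charModule f) ≪≫ₗ
    Submodule.quotEquivOfEq _ _ (by
      rw [range_leftComp_charPresentation, ← hΦ, LinearMap.ker_comp]) ≪≫ₗ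
    (Φ.comp (homKerEquivSkewDerivation f g).toLinearMap).quotKerEquivRange ≪≫ₗ
    LinearEquiv.ofEq _ _ (LinearEquiv.range_comp _ _)

end ExtCharacters

/-! ### Skew derivations of presented algebras -/

section Presented

variable {k X : Type*} [CommRing k]

/-- The representation of the free algebra by upper triangular matrices with diagonal `(f, g)` and
prescribed corner entries `v` on the generators. -/
def triangularLift (f g : FreeAlgebra k X →ₐ[k] k) (v : X → k) :
    FreeAlgebra k X →ₐ[k] Matrix (Fin 2) (Fin 2) k :=
  FreeAlgebra.lift k fun i => !![f (.ι k i), v i; 0, g (.ι k i)]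

theorem triangularLift_apply (f g : FreeAlgebra k X →ₐ[k] k) (v : X → k) (u : FreeAlgebra k X) :
    triangularLift f g v u = !![f u, triangularLift f g v u 0 1; 0, g u] := by
  induction u using FreeAlgebra.induction with
  | grade0 t =>
    ext i j
    fin_cases i <;> fin_cases j <;> simp [Matrix.algebraMap_matrix_apply]
  | grade1 i => simp [triangularLift]
  | mul u v hu hv =>
    rw [map_mul, hu, hv]
    simp
  | add u v hu hv =>
    rw [map_add, hu, hv]
    simp

/-- The skew derivation of the free algebra with prescribed values `v` on the generators, read off
as the corner entry of `triangularLift`. -/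
def freeSkewDerivation (f g : FreeAlgebra k X →ₐ[k] k) (v : X → k) : FreeAlgebra k X →ₗ[k] k :=
  (Matrix.entryLinearMap k k 0 1).comp (triangularLift f g v).toLinearMap

theorem freeSkewDerivation_ι (f g : FreeAlgebra k X →ₐ[k] k) (v : X → k) (i : X) :
    freeSkewDerivation f g v (.ι k i) = v i := by
  simp [freeSkewDerivation, triangularLift]

theorem triangularLift_eq (f g : FreeAlgebra k X →ₐ[k] k) (v : X → k) (u : FreeAlgebra k X) :
    triangularLift f g v u = !![f u, freeSkewDerivation f g v u; 0, g u] :=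
  triangularLift_apply f g v u

theorem freeSkewDerivation_mem (f g : FreeAlgebra k X →ₐ[k] k) (v : X → k) :
    freeSkewDerivation f g v ∈ skewDerivation f g := fun s t => by
  have h := congrFun (congrFun (map_mul (triangularLift f g v) s t) 0) 1
  simpa [triangularLift_eq] using h

variable {r : FreeAlgebra k X → FreeAlgebra k X → Prop} (f g : RingQuot r →ₐ[k] k)

theorem exists_mem_skewDerivation_of_rel (v : X → k)
    (h : ∀ s t, r s t →
      freeSkewDerivation (f.comp (RingQuot.mkAlgHom k r)) (g.comp (RingQuot.mkAlgHom k r)) v s =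
      freeSkewDerivation (f.comp (RingQuot.mkAlgHom k r)) (g.comp (RingQuot.mkAlgHom k r)) v t) :
    ∃ δ ∈ skewDerivation f g, ∀ i, δ (RingQuot.mkAlgHom k r (.ι k i)) = v i := by
  let M := triangularLift (f.comp (RingQuot.mkAlgHom k r)) (g.comp (RingQuot.mkAlgHom k r)) v
  have hM : ∀ ⦃s t⦄, r s t → M s = M t := fun s t hst => by
    simp only [M, triangularLift_eq, h s t hst, AlgHom.comp_apply, RingQuot.mkAlgHom_rel k hst]
  let δ := (Matrix.entryLinearMap k k 0 1).comp (RingQuot.liftAlgHom k ⟨M, hM⟩).toLinearMap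
  have hδ (u : FreeAlgebra k X) : δ (RingQuot.mkAlgHom k r u) =
      freeSkewDerivation (f.comp (RingQuot.mkAlgHom k r)) (g.comp (RingQuot.mkAlgHom k r)) v u :=
    congrFun (congrFun (RingQuot.liftAlgHom_mkAlgHom_apply k M hM u) 0) 1
  refine ⟨δ, fun s t => ?_, fun i => (hδ _).trans (freeSkewDerivation_ι _ _ _ _)⟩
  obtain ⟨s, rfl⟩ := RingQuot.mkAlgHom_surjective k r s
  obtain ⟨t, rfl⟩ := RingQuot.mkAlgHom_surjective k r t
  rw [← map_mul, hδ, hδ, hδ]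
  exact freeSkewDerivation_mem _ _ v s t

variable {f g}

theorem eq_zero_of_mem_skewDerivation {δ : RingQuot r →ₗ[k] k} (hδ : δ ∈ skewDerivation f g)
    (h : ∀ i, δ (RingQuot.mkAlgHom k r (.ι k i)) = 0) : δ = 0 := by
  ext u
  obtain ⟨u, rfl⟩ := RingQuot.mkAlgHom_surjective k r u
  induction u using FreeAlgebra.induction with
  | grade0 t => simpa using apply_algebraMap_of_mem_skewDerivation hδ t
  | grade1 i => exact h i
  | mul u v hu hv => rw [map_mul, hδ, hu, hv]; simp
  | add u v hu hv => rw [map_add, map_add, hu, hv, map_add]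

end Presented

theorem sq_eq_neg_one_of_isPrimitiveRoot_four {R : Type*} [CommRing R] [IsDomain R] {ζ : R}
    (hζ : IsPrimitiveRoot ζ 4) : ζ ^ 2 = -1 :=
  (hζ.pow four_pos (show 4 = 2 * 2 by rfl)).eq_neg_one_of_two_right

theorem two_ne_zero_of_isPrimitiveRoot_four {R : Type*} [CommRing R] [IsDomain R] {ζ : R}
    (hζ : IsPrimitiveRoot ζ 4) : (2 : R) ≠ 0 :=
  mod_cast (hζ.pow four_pos (show 4 = 2 * 2 by rfl)).neZero'.ne

/-! ### Characters and skew derivations of `D` -/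

namespace DAlg

section Relations

variable (𝕜 ξ ν)

theorem gA_pow_four : gA 𝕜 ξ ν ^ 4 = 1 := by
  simpa only [gA, map_pow, map_one] using RingQuot.mkAlgHom_rel 𝕜 (DRel.afour (ξ := ξ) (ν := ν))

theorem gA_mul_gD : gA 𝕜 ξ ν * gD 𝕜 ξ ν = 1 := by
  simpa only [gA, gD, map_mul, map_one] using
    RingQuot.mkAlgHom_rel 𝕜 (DRel.adone (ξ := ξ) (ν := ν))

theorem gB_mul_gB : gB 𝕜 ξ ν * gB 𝕜 ξ ν = 0 := by
  simpa only [gB, map_mul, map_zero] using RingQuot.mkAlgHom_rel 𝕜 (DRel.bsq (ξ := ξ) (ν := ν))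

theorem gC_mul_gC : gC 𝕜 ξ ν * gC 𝕜 ξ ν = 0 := by
  simpa only [gC, map_mul, map_zero] using RingQuot.mkAlgHom_rel 𝕜 (DRel.csq (ξ := ξ) (ν := ν))

theorem gA_mul_gA_mul_gC : gA 𝕜 ξ ν * gA 𝕜 ξ ν * gC 𝕜 ξ ν = gB 𝕜 ξ ν := by
  simpa only [gA, gB, gC, map_mul] using RingQuot.mkAlgHom_rel 𝕜 (DRel.aac (ξ := ξ) (ν := ν))

theorem gX_mul_gX : gX 𝕜 ξ ν * gX 𝕜 ξ ν = gG 𝕜 ξ ν * gG 𝕜 ξ ν - 1 := by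
  simpa only [gX, gG, map_mul, map_sub, map_one] using
    RingQuot.mkAlgHom_rel 𝕜 (DRel.xsq (ξ := ξ) (ν := ν))

theorem gG_mul_gX : gG 𝕜 ξ ν * gX 𝕜 ξ ν = -(gX 𝕜 ξ ν * gG 𝕜 ξ ν) := by
  simpa only [gX, gG, map_mul, map_neg] using
    RingQuot.mkAlgHom_rel 𝕜 (DRel.gx (ξ := ξ) (ν := ν))

theorem gA_mul_gX : gA 𝕜 ξ ν * gX 𝕜 ξ ν =
    (ν * ξ) • (gB 𝕜 ξ ν + gG 𝕜 ξ ν * gC 𝕜 ξ ν) - ξ • (gX 𝕜 ξ ν * gA 𝕜 ξ ν) := by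
  simpa only [gA, gX, gB, gG, gC, map_mul, map_add, map_sub, map_smul] using
    RingQuot.mkAlgHom_rel 𝕜 (DRel.axr (ξ := ξ) (ν := ν))

theorem gB_mul_gX : gB 𝕜 ξ ν * gX 𝕜 ξ ν =
    (ν * ξ) • (gA 𝕜 ξ ν - gG 𝕜 ξ ν * gD 𝕜 ξ ν) + ξ • (gX 𝕜 ξ ν * gB 𝕜 ξ ν) := by
  simpa only [gA, gX, gB, gG, gD, map_mul, map_add, map_sub, map_smul] using
    RingQuot.mkAlgHom_rel 𝕜 (DRel.bxr (ξ := ξ) (ν := ν))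

end Relations

section Characters

variable (f : DAlg 𝕜 ξ ν →ₐ[𝕜] 𝕜)

theorem map_gA_pow_four : f (gA 𝕜 ξ ν) ^ 4 = 1 := by
  rw [← map_pow, gA_pow_four, map_one]

theorem map_gA_ne_zero : f (gA 𝕜 ξ ν) ≠ 0 := fun h => by
  simpa [h] using map_gA_pow_four f

theorem map_gB : f (gB 𝕜 ξ ν) = 0 := by
  rw [← mul_self_eq_zero, ← map_mul, gB_mul_gB, map_zero]

theorem map_gC : f (gC 𝕜 ξ ν) = 0 := by
  rw [← mul_self_eq_zero, ← map_mul, gC_mul_gC, map_zero]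

theorem map_gD : f (gD 𝕜 ξ ν) = f (gA 𝕜 ξ ν) ^ 3 := by
  have had : f (gA 𝕜 ξ ν) * f (gD 𝕜 ξ ν) = 1 := by rw [← map_mul, gA_mul_gD, map_one]
  linear_combination f (gA 𝕜 ξ ν) ^ 3 * had - f (gD 𝕜 ξ ν) * map_gA_pow_four f

theorem map_gG (hν : ν ≠ 0) (hξ : ξ ≠ 0) : f (gG 𝕜 ξ ν) = f (gA 𝕜 ξ ν) ^ 2 := by
  have hbx := congrArg f (gB_mul_gX 𝕜 ξ ν)
  simp only [map_mul, map_add, map_sub, map_smul, smul_eq_mul, map_gB, map_gD, zero_mul, mul_zero,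
    add_zero, zero_eq_mul, mul_eq_zero, hν, hξ, or_self, false_or] at hbx
  linear_combination -f (gA 𝕜 ξ ν) * hbx - f (gG 𝕜 ξ ν) * map_gA_pow_four f

theorem map_gX (hν : ν ≠ 0) (hξ : ξ ≠ 0) : f (gX 𝕜 ξ ν) = 0 := by
  rw [← mul_self_eq_zero, ← map_mul, gX_mul_gX, map_sub, map_mul, map_one, map_gG f hν hξ]
  linear_combination map_gA_pow_four f

end Characters

section SkewDerivation

variable {f g : DAlg 𝕜 ξ ν →ₐ[𝕜] 𝕜} {δ : DAlg 𝕜 ξ ν →ₗ[𝕜] 𝕜}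

theorem skewDerivation_gB (hδ : δ ∈ skewDerivation f g) :
    δ (gB 𝕜 ξ ν) = f (gA 𝕜 ξ ν) ^ 2 * δ (gC 𝕜 ξ ν) := by
  rw [← gA_mul_gA_mul_gC, hδ, map_mul, map_gC]
  ring

theorem skewDerivation_gA (hδ : δ ∈ skewDerivation f g) :
    (f (gA 𝕜 ξ ν) + g (gA 𝕜 ξ ν)) * (f (gA 𝕜 ξ ν) ^ 2 + g (gA 𝕜 ξ ν) ^ 2) * δ (gA 𝕜 ξ ν) = 0 := by
  have ha := congrArg δ (gA_pow_four 𝕜 ξ ν)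
  simp only [pow_succ, pow_zero, one_mul, hδ _ _, map_mul,
    apply_one_of_mem_skewDerivation hδ] at ha
  linear_combination ha

theorem skewDerivation_gX (hν : ν ≠ 0) (hξ : ξ ≠ 0) (hδ : δ ∈ skewDerivation f g) :
    (f (gA 𝕜 ξ ν) ^ 2 + g (gA 𝕜 ξ ν) ^ 2) * δ (gX 𝕜 ξ ν) = 0 := by
  have hgx := congrArg δ (gG_mul_gX 𝕜 ξ ν)
  rw [map_neg, hδ, hδ, map_gX f hν hξ, map_gX g hν hξ, map_gG f hν hξ, map_gG g hν hξ] at hgx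
  linear_combination hgx

theorem skewDerivation_gC (hν : ν ≠ 0) (hξ : ξ ≠ 0) (hδ : δ ∈ skewDerivation f g) :
    2 * ν * ξ * f (gA 𝕜 ξ ν) ^ 2 * δ (gC 𝕜 ξ ν) =
      (f (gA 𝕜 ξ ν) + ξ * g (gA 𝕜 ξ ν)) * δ (gX 𝕜 ξ ν) := by
  have hax := congrArg δ (gA_mul_gX 𝕜 ξ ν)
  simp only [map_sub, map_add, map_smul, smul_eq_mul, hδ _ _, skewDerivation_gB hδ, map_gX _ hν hξ,
    map_gG f hν hξ, map_gC] at hax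
  linear_combination -hax

theorem skewDerivation_gD_eq_zero (hδ : δ ∈ skewDerivation f g) (hA : δ (gA 𝕜 ξ ν) = 0) :
    δ (gD 𝕜 ξ ν) = 0 := by
  have had := congrArg δ (gA_mul_gD 𝕜 ξ ν)
  simpa [hδ _ _, hA, apply_one_of_mem_skewDerivation hδ, map_gA_ne_zero] using had

theorem skewDerivation_gG_eq_zero (hν : ν ≠ 0) (hξ : ξ ≠ 0) (hδ : δ ∈ skewDerivation f g)
    (hA : δ (gA 𝕜 ξ ν) = 0) : δ (gG 𝕜 ξ ν) = 0 := by
  have hbx := congrArg δ (gB_mul_gX 𝕜 ξ ν)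
  simpa [hδ _ _, hA, skewDerivation_gD_eq_zero hδ hA, map_gX _ hν hξ, map_gB, map_gD, hν, hξ,
    map_gA_ne_zero] using hbx

theorem eq_zero_of_gA_gX (hξ : IsPrimitiveRoot ξ 4) (hν : ν ≠ 0) (hδ : δ ∈ skewDerivation f g)
    (hA : δ (gA 𝕜 ξ ν) = 0) (hX : δ (gX 𝕜 ξ ν) = 0) : δ = 0 := by
  have hξ0 : ξ ≠ 0 := hξ.ne_zero four_ne_zero
  have h2 := two_ne_zero_of_isPrimitiveRoot_four hξ
  have hC : δ (gC 𝕜 ξ ν) = 0 := by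
    simpa [hX, hν, hξ0, h2, map_gA_ne_zero] using skewDerivation_gC hν hξ0 hδ
  have hB : δ (gB 𝕜 ξ ν) = 0 := by rw [skewDerivation_gB hδ, hC, mul_zero]
  exact eq_zero_of_mem_skewDerivation hδ fun
    | .a => hA
    | .b => hB
    | .c => hC
    | .d => skewDerivation_gD_eq_zero hδ hA
    | .x => hX
    | .g => skewDerivation_gG_eq_zero hν hξ0 hδ hA

theorem exists_skewDerivation_gA_eq (h2 : (2 : 𝕜) ≠ 0) (hδ : δ ∈ skewDerivation f g) :
    ∃ t, δ (gA 𝕜 ξ ν) = t * (f (gA 𝕜 ξ ν) - g (gA 𝕜 ξ ν)) := by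
  rcases eq_or_ne (f (gA 𝕜 ξ ν)) (g (gA 𝕜 ξ ν)) with hfg | hfg
  · have ha : 2 * 2 * f (gA 𝕜 ξ ν) ^ 3 * δ (gA 𝕜 ξ ν) = 0 := by
      have := skewDerivation_gA hδ
      rw [← hfg] at this
      linear_combination this
    exact ⟨0, by simpa [h2, map_gA_ne_zero] using ha⟩
  · exact ⟨_, (div_mul_cancel₀ _ (sub_ne_zero.2 hfg)).symm⟩

theorem ker_skewDerivationEval_gX (hξ : IsPrimitiveRoot ξ 4) (hν : ν ≠ 0)
    (f g : DAlg 𝕜 ξ ν →ₐ[𝕜] 𝕜) :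
    LinearMap.ker (skewDerivationEval f g (gX 𝕜 ξ ν)) = innerSkewDerivation f g := by
  have hξ0 : ξ ≠ 0 := hξ.ne_zero four_ne_zero
  ext ⟨δ, hδ⟩
  rw [mem_innerSkewDerivation]
  change δ (gX 𝕜 ξ ν) = 0 ↔ ∃ t, ∀ u, δ u = t * (f u - g u)
  constructor
  · intro hX
    obtain ⟨t, ht⟩ := exists_skewDerivation_gA_eq (two_ne_zero_of_isPrimitiveRoot_four hξ) hδ
    have hδt : δ - t • (f.toLinearMap - g.toLinearMap) = 0 :=
      eq_zero_of_gA_gX hξ hν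
        (sub_mem hδ (Submodule.smul_mem _ t (sub_mem_skewDerivation f g)))
        (sub_eq_zero.2 ht)
        (by simp [hX, map_gX _ hν hξ0])
    exact ⟨t, fun u => LinearMap.congr_fun (sub_eq_zero.1 hδt) u⟩
  · rintro ⟨t, ht⟩
    rw [ht, map_gX f hν hξ0, map_gX g hν hξ0, sub_zero, mul_zero]

/-- The values on the generators of the character of `D` that sends `a` to `p`. -/
def charValues (p : 𝕜) : DGen → 𝕜
  | .a => p
  | .b | .c | .x => 0
  | .d => p ^ 3
  | .g => p ^ 2

theorem map_eq_charValues (hν : ν ≠ 0) (hξ : ξ ≠ 0) (f : DAlg 𝕜 ξ ν →ₐ[𝕜] 𝕜) :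
    ∀ i, f (RingQuot.mkAlgHom 𝕜 (DRel 𝕜 ξ ν) (.ι 𝕜 i)) = charValues (f (gA 𝕜 ξ ν)) i
  | .a => rfl
  | .b => map_gB f
  | .c => map_gC f
  | .d => map_gD f
  | .x => map_gX f hν hξ
  | .g => map_gG f hν hξ

/-- The values on the generators of the skew derivation `δ` of `D` with `δ a = 0`, `δ c = C` and
`δ x = X`, where `p` is the value of the left character at `a`. -/
def skewDerivationValues (p C X : 𝕜) : DGen → 𝕜
  | .a | .d | .g => 0
  | .b => p ^ 2 * C
  | .c => C
  | .x => X

theorem freeSkewDerivation_eq_of_dRel {p q C X : 𝕜} (hξ : ξ ^ 2 = -1) (hp : p ^ 4 = 1)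
    (hpq : q ^ 2 = -p ^ 2) (hC : p * C = ξ * q * C)
    (hX : (p + ξ * q) * X = 2 * ν * ξ * p ^ 2 * C) {F G : FreeAlgebra 𝕜 DGen →ₐ[𝕜] 𝕜}
    (hF : ∀ i, F (.ι 𝕜 i) = charValues p i) (hG : ∀ i, G (.ι 𝕜 i) = charValues q i)
    {s t : FreeAlgebra 𝕜 DGen} (hst : DRel 𝕜 ξ ν s t) :
    freeSkewDerivation F G (skewDerivationValues p C X) s =
      freeSkewDerivation F G (skewDerivationValues p C X) t := by
  have hmul := freeSkewDerivation_mem F G (skewDerivationValues p C X)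
  have hone := apply_one_of_mem_skewDerivation hmul
  cases hst <;>
    simp only [map_add, map_sub, map_neg, map_smul, map_zero, map_mul, pow_succ _ 3, pow_succ _ 2,
      pow_succ _ 1, pow_one, hmul _ _, hone, freeSkewDerivation_ι, hF, hG, charValues,
      skewDerivationValues, smul_eq_mul]
  case ab => linear_combination p ^ 2 * hC
  case ac => linear_combination hC
  case cd => linear_combination C * q * hpq - ξ * p ^ 2 * hC - p ^ 2 * q * C * hξ
  case bd => linear_combination p ^ 2 * C * q * hpq - ξ * p ^ 4 * hC - p ^ 4 * q * C * hξ
  case gx => linear_combination X * hpq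
  case bg => linear_combination p ^ 2 * C * hpq
  case cg => linear_combination C * hpq
  case axr => linear_combination hX
  case dxr => linear_combination p ^ 2 * hX + ν * ξ * C * hp - ξ * X * q * hpq
  all_goals ring

theorem exists_skewDerivation_gX_eq (hξ : IsPrimitiveRoot ξ 4) (hν : ν ≠ 0)
    (hfg : f (gA 𝕜 ξ ν) ^ 2 + g (gA 𝕜 ξ ν) ^ 2 = 0) (X : 𝕜) :
    ∃ δ ∈ skewDerivation f g, δ (gX 𝕜 ξ ν) = X := by
  have hξ0 : ξ ≠ 0 := hξ.ne_zero four_ne_zero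
  have hξ2 := sq_eq_neg_one_of_isPrimitiveRoot_four hξ
  let p := f (gA 𝕜 ξ ν)
  let q := g (gA 𝕜 ξ ν)
  have hpq : q ^ 2 = -p ^ 2 := by linear_combination hfg
  have h0 : 2 * ν * ξ * p ^ 2 ≠ 0 := by
    simp [p, hν, hξ0, two_ne_zero_of_isPrimitiveRoot_four hξ, map_gA_ne_zero]
  -- The value at `c` is forced by the relation `ax + ξxa = νξ(b + gc)`.
  obtain ⟨C, hX⟩ : ∃ C, (p + ξ * q) * X = 2 * ν * ξ * p ^ 2 * C :=
    ⟨(p + ξ * q) * X / (2 * ν * ξ * p ^ 2), (mul_div_cancel₀ _ h0).symm⟩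
  have hC : p * C = ξ * q * C := by
    refine mul_left_cancel₀ h0 ?_
    linear_combination -(p - ξ * q) * hX - X * hξ2 * q ^ 2 + X * hpq
  obtain ⟨δ, hδ, hδX⟩ := exists_mem_skewDerivation_of_rel f g (skewDerivationValues p C X)
    fun s t => freeSkewDerivation_eq_of_dRel hξ2 (map_gA_pow_four f) hpq hC hX
      (map_eq_charValues hν hξ0 f) (map_eq_charValues hν hξ0 g)
  exact ⟨δ, hδ, hδX .x⟩

theorem range_skewDerivationEval_gX_eq_top (hξ : IsPrimitiveRoot ξ 4) (hν : ν ≠ 0)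
    (hfg : f (gA 𝕜 ξ ν) ^ 2 + g (gA 𝕜 ξ ν) ^ 2 = 0) :
    LinearMap.range (skewDerivationEval f g (gX 𝕜 ξ ν)) = ⊤ :=
  LinearMap.range_eq_top.2 fun X =>
    let ⟨δ, hδ, hX⟩ := exists_skewDerivation_gX_eq hξ hν hfg X
    ⟨⟨δ, hδ⟩, hX⟩

theorem range_skewDerivationEval_gX_eq_bot (hν : ν ≠ 0) (hξ : ξ ≠ 0)
    (hfg : f (gA 𝕜 ξ ν) ^ 2 + g (gA 𝕜 ξ ν) ^ 2 ≠ 0) :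
    LinearMap.range (skewDerivationEval f g (gX 𝕜 ξ ν)) = ⊥ :=
  LinearMap.range_eq_bot.2 <| LinearMap.ext fun δ =>
    (mul_eq_zero.1 (skewDerivation_gX hν hξ δ.2)).resolve_left hfg

end SkewDerivation

open CategoryTheory Opposite

theorem finrank_ext_one (hξ : IsPrimitiveRoot ξ 4) (hν : ν ≠ 0) (f g : DAlg 𝕜 ξ ν →ₐ[𝕜] 𝕜)
    [Decidable (f (gA 𝕜 ξ ν) ^ 2 + g (gA 𝕜 ξ ν) ^ 2 = 0)] :
    Module.finrank 𝕜
      (((Ext 𝕜 (ModuleCat (DAlg 𝕜 ξ ν)) 1).obj (op (charModule g))).obj (charModule f)) =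
      if f (gA 𝕜 ξ ν) ^ 2 + g (gA 𝕜 ξ ν) ^ 2 = 0 then 1 else 0 := by
  rw [(extOneEquivRange f g _ (ker_skewDerivationEval_gX hξ hν f g)).finrank_eq]
  split_ifs with hfg
  · rw [range_skewDerivationEval_gX_eq_top hξ hν hfg, finrank_top, Module.finrank_self]
  · rw [range_skewDerivationEval_gX_eq_bot hν (hξ.ne_zero four_ne_zero) hfg, finrank_bot]

end DAlg

theorem sq_pow_add_sq_pow_eq_zero_iff {R : Type*} [CommRing R] [IsDomain R] {ζ : R}
    (hζ : IsPrimitiveRoot ζ 4) (ℓ m : ZMod 4) :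
    (ζ ^ ℓ.val) ^ 2 + (ζ ^ m.val) ^ 2 = 0 ↔ m = ℓ + 1 ∨ m = ℓ - 1 := by
  have hpos : (1 + 1 : R) ≠ 0 := one_add_one_eq_two (R := R) ▸
    two_ne_zero_of_isPrimitiveRoot_four hζ
  have hneg : (-1 + -1 : R) ≠ 0 := by rwa [← neg_add, neg_ne_zero]
  have hparity : (m = ℓ + 1 ∨ m = ℓ - 1) ↔ ¬(Even ℓ.val ↔ Even m.val) := by
    revert ℓ m
    decide
  rw [hparity, pow_right_comm ζ ℓ.val, pow_right_comm ζ m.val,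
    sq_eq_neg_one_of_isPrimitiveRoot_four hζ]
  rcases Nat.even_or_odd ℓ.val with hℓ | hℓ <;> rcases Nat.even_or_odd m.val with hm | hm <;>
    simp [hℓ, hm, hℓ.neg_one_pow, hm.neg_one_pow, hpos, hneg, ← Nat.not_odd_iff_even]

open CategoryTheory in
theorem stmt_15_general (𝕜 : Type) [Field 𝕜] (ξ ν : 𝕜) (hξ : IsPrimitiveRoot ξ 4) (hν : ν ≠ 0)
    (ℓ m : ZMod 4) (f g : DAlg 𝕜 ξ ν →ₐ[𝕜] 𝕜)
    (hf : IsChi 𝕜 ξ ν f ℓ) (hg : IsChi 𝕜 ξ ν g m) :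
    Module.finrank 𝕜
      (((Ext 𝕜 (ModuleCat (DAlg 𝕜 ξ ν)) 1).obj
          (Opposite.op (chiModuleCat 𝕜 ξ ν g))).obj (chiModuleCat 𝕜 ξ ν f)) =
      if m = ℓ + 1 ∨ m = ℓ - 1 then 1 else 0 := by
  have hparity : f (gA 𝕜 ξ ν) ^ 2 + g (gA 𝕜 ξ ν) ^ 2 = 0 ↔ m = ℓ + 1 ∨ m = ℓ - 1 := by
    rw [hf.1, hg.1]
    exact sq_pow_add_sq_pow_eq_zero_iff hξ ℓ m
  classical
  simp only [← hparity]
  exact DAlg.finrank_ext_one hξ hν f g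

open CategoryTheory in
/-- For all `ℓ, m ∈ ℤ/4`, the `𝕜`-dimension of
`Ext¹_D(𝕜_{χ^m}, 𝕜_{χ^ℓ})` equals `1` if `m ≡ ℓ ± 1 (mod 4)` and `0` otherwise. -/
theorem stmt_15 (𝕜 : Type) [Field 𝕜] [IsAlgClosed 𝕜] [CharZero 𝕜]
    (ξ ν : 𝕜) (hξ : IsPrimitiveRoot ξ 4) (hν : ν ^ 2 = 2)
    (ℓ m : ZMod 4) (f g : DAlg 𝕜 ξ ν →ₐ[𝕜] 𝕜)
    (hf : IsChi 𝕜 ξ ν f ℓ) (hg : IsChi 𝕜 ξ ν g m) :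
    Module.finrank 𝕜
      (((Ext 𝕜 (ModuleCat (DAlg 𝕜 ξ ν)) 1).obj
          (Opposite.op (chiModuleCat 𝕜 ξ ν g))).obj (chiModuleCat 𝕜 ξ ν f)) =
      if m = ℓ + 1 ∨ m = ℓ - 1 then 1 else 0 := by
  exact stmt_15_general 𝕜 ξ ν hξ (by rintro rfl; norm_num at hν) ℓ m f g hf hg
end

section
/- For all (i,j), (k,ℓ) ∈ Λ and all m ∈ Z/4, the Ext groups Ext¹_D(V_{i,j}, V_{k,ℓ}), Ext¹_D(V_{i,j}, k_{χ^m}) and Ext¹_D(k_{χ^m}, V_{i,j}) all vanish. -/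
open scoped TensorProduct

variable (𝕜 : Type) [Field 𝕜] (ξ ν : 𝕜)

variable {𝕜 ξ ν}
variable {V W : Type} [AddCommGroup V] [Module 𝕜 V] [AddCommGroup W] [Module 𝕜 W]

/-- The left `D`-module determined by a representation `ρ : D →ₐ[𝕜] End 𝕜 V`, as an
object of `ModuleCat D`. -/
noncomputable def repModuleCat {𝕜 : Type} [Field 𝕜] {ξ ν : 𝕜} {V : Type} [AddCommGroup V]
    [Module 𝕜 V] (ρ : DAlg 𝕜 ξ ν →ₐ[𝕜] Module.End 𝕜 V) : ModuleCat (DAlg 𝕜 ξ ν) :=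
  @ModuleCat.of (DAlg 𝕜 ξ ν) _ V _ (Module.compHom V ρ.toRingHom)

/-!
The module `V_{i,j}` is two-dimensional and generated by a highest weight vector: a vector `m`
with `a m = l m`, `g m = u m` and `c m = 0`, where `l = ξⁱ` and `u = ξʲ`. The relations give
`c x m = κ m` with `κ = νξ(l³ - lu)`, and `2i ≠ j` says exactly that `κ ≠ 0`. Such a module is
determined by `m`, so a highest weight vector of the same weight in any module is the image of `m`
under a homomorphism. As `c x` commutes with `a` and `g`, it sends the projector `e ∈ D` onto the
weight `(l, u)` to a highest weight vector of the regular module, and `c x e` acts on `m` by a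
nonzero scalar. This splits `D → V_{i,j}`, so `V_{i,j}` is projective.

The elements `a, ξc, x, g` of the opposite algebra satisfy the same relations with `(ξ, ν)` replaced
by `(-ξ, -ν)`, and the dual of `V_{i,j}` is again a highest weight module, of weight `(-ξl, -u)`,
with scalar `ξκ` in place of `κ`. So the dual is projective over the opposite algebra, and
`V_{i,j}` is injective.
-/

open CategoryTheory in
theorem isZero_Ext_succ_of_injective {R : Type*} [Ring R] {C : Type*} [Category C] [Abelian C]
    [Linear R C] [EnoughProjectives C] (X Y : C) [Injective Y] (n : ℕ) :
    Limits.IsZero (((Ext R C (n + 1)).obj (Opposite.op X)).obj Y) := by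
  let P := projectiveResolution X
  refine .of_iso ?_ (P.isoExt (n + 1) Y)
  rw [← HomologicalComplex.exactAt_iff_isZero_homology,
    HomologicalComplex.exactAt_iff' _ n (n + 1) (n + 2) (by simp) (by simp),
    ShortComplex.moduleCat_exact_iff]
  intro (φ : P.complex.X (n + 1) ⟶ Y) (hφ : P.complex.d (n + 2) (n + 1) ≫ φ = 0)
  exact ⟨(P.exact_succ n).descToInjective φ hφ, (P.exact_succ n).comp_descToInjective φ hφ⟩

section Duality

open Module MulOpposite

variable {K A M N : Type*} [Field K] [Ring A] [Algebra K A]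
  [AddCommGroup M] [Module K M] [Module A M] [IsScalarTower K A M]
  [AddCommGroup N] [Module K N] [Module A N] [IsScalarTower K A N]

/-- The dual of a left `A`-module as a module over the opposite algebra, by `(z φ)(m) = φ(z m)`.
It is only a local instance, since `Aᵐᵒᵖ` may already act on the dual through its codomain. -/
abbrev dualModuleOp : Module Aᵐᵒᵖ (Dual K M) where
  smul z φ := φ ∘ₗ Algebra.lsmul K K M z.unop
  one_smul φ := by ext m; exact congrArg φ (one_smul A m)
  mul_smul y z φ := by ext m; exact congrArg φ (mul_smul z.unop y.unop m)
  smul_zero _ := rfl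
  smul_add _ _ _ := rfl
  add_smul y z φ := by
    ext m; exact (congrArg φ (add_smul y.unop z.unop m)).trans (map_add φ _ _)
  zero_smul φ := by ext m; exact (congrArg φ (zero_smul A m)).trans (map_zero φ)

attribute [local instance] dualModuleOp

theorem op_smul_dual_apply (z : A) (φ : Dual K M) (m : M) : (op z • φ) m = φ (z • m) := rfl

theorem isScalarTower_op_dual : IsScalarTower K Aᵐᵒᵖ (Dual K M) where
  smul_assoc r z φ := LinearMap.ext fun m ↦
    (congrArg φ (smul_assoc r z.unop m)).trans (map_smul φ r _)

variable (K) in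
/-- The transpose of an `A`-linear map, as a map of modules over the opposite algebra. -/
def dualMapOp (f : M →ₗ[A] N) : Dual K N →ₗ[Aᵐᵒᵖ] Dual K M where
  __ := (f.restrictScalars K).dualMap
  map_smul' z φ := LinearMap.ext fun m ↦ congrArg φ (map_smul f z.unop m).symm

theorem dualMapOp_apply (f : M →ₗ[A] N) (φ : Dual K N) (m : M) : dualMapOp K f φ m = φ (f m) := rfl

theorem dualMapOp_surjective {f : M →ₗ[A] N} (hf : Function.Injective f) :
    Function.Surjective (dualMapOp K f) :=
  LinearMap.dualMap_surjective_of_injective (f := f.restrictScalars K) hf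

theorem exists_linearMap_dual_apply_eq [FiniteDimensional K M] (T : Dual K M →ₗ[Aᵐᵒᵖ] Dual K N) :
    ∃ h : N →ₗ[A] M, ∀ (φ : Dual K M) (n : N), φ (h n) = T φ n := by
  have := isScalarTower_op_dual (K := K) (A := A) (M := M)
  have := isScalarTower_op_dual (K := K) (A := A) (M := N)
  let h : N →ₗ[K] M :=
    (evalEquiv K M).symm.toLinearMap ∘ₗ (T.restrictScalars K).dualMap ∘ₗ Dual.eval K N
  have apply_h (φ : Dual K M) (n : N) : φ (h n) = T φ n := apply_evalEquiv_symm_apply ..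
  have h_smul (z : A) (n : N) : h (z • n) = z • h n := by
    refine (evalEquiv K M).injective (LinearMap.ext fun φ ↦ ?_)
    calc φ (h (z • n)) = (op z • T φ) n := apply_h φ _
      _ = (op z • φ) (h n) := by rw [← map_smul, apply_h]
  exact ⟨{ h with map_smul' := h_smul }, apply_h⟩

variable (K A M) in
theorem injective_of_projective_dual [FiniteDimensional K M] [Projective Aᵐᵒᵖ (Dual K M)] :
    Module.Injective A M := by
  refine ⟨fun X Y _ _ _ _ f hf p ↦ ?_⟩
  let _ : Module K X := Module.compHom X (algebraMap K A)
  let _ : Module K Y := Module.compHom Y (algebraMap K A)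
  have : IsScalarTower K A X := .of_algebraMap_smul fun _ _ ↦ rfl
  have : IsScalarTower K A Y := .of_algebraMap_smul fun _ _ ↦ rfl
  obtain ⟨T, hT⟩ := projective_lifting_property (dualMapOp K f) (dualMapOp K p)
    (dualMapOp_surjective hf)
  obtain ⟨h, apply_h⟩ := exists_linearMap_dual_apply_eq T
  refine ⟨h, fun y ↦ (evalEquiv K M).injective (LinearMap.ext fun φ ↦ ?_)⟩
  calc φ (h (f y)) = (dualMapOp K f ∘ₗ T) φ y := apply_h φ (f y)
    _ = φ (p y) := by rw [hT, dualMapOp_apply]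

end Duality

section Eigenvectors

variable {K A M N : Type*} [Field K] [Ring A] [Algebra K A]
  [AddCommGroup M] [Module K M] [Module A M] [IsScalarTower K A M]
  [AddCommGroup N] [Module K N] [Module A N] [IsScalarTower K A N]

theorem map_smul_of_adjoin_eq_top {s : Set A} (hs : Algebra.adjoin K s = ⊤) (F : M →ₗ[K] N)
    (hF : ∀ z ∈ s, ∀ m, F (z • m) = z • F m) (z : A) (m : M) : F (z • m) = z • F m := by
  have hz : z ∈ Algebra.adjoin K s := hs ▸ Algebra.mem_top
  induction hz using Algebra.adjoin_induction generalizing m with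
  | mem y hy => exact hF y hy m
  | algebraMap r => rw [algebraMap_smul, algebraMap_smul, map_smul]
  | add y z _ _ hy hz => rw [add_smul, add_smul, map_add, hy, hz]
  | mul y z _ _ hy hz => rw [mul_smul, mul_smul, hy, hz]

/-- The sum of the powers of `l⁻¹ y`. If `yⁿ = 1` and `lⁿ = 1` it is `n` times the projection
onto the `l`-eigenspace of `y`. -/
def eigenspaceSum (y : A) (l : K) (n : ℕ) : A :=
  ∑ k ∈ Finset.range n, (l⁻¹ • y) ^ k

theorem mul_eigenspaceSum {y : A} {l : K} {n : ℕ} (hn : n ≠ 0) (hy : y ^ n = 1)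
    (hl : l ^ n = 1) : y * eigenspaceSum y l n = l • eigenspaceSum y l n := by
  have l_ne_zero : l ≠ 0 := (IsUnit.of_pow_eq_one hl hn).ne_zero
  have telescope : (l⁻¹ • y - 1) * eigenspaceSum y l n = 0 := by
    rw [eigenspaceSum, mul_geom_sum, smul_pow, hy, inv_pow, hl, inv_one, one_smul, sub_self]
  rw [sub_mul, one_mul, sub_eq_zero, smul_mul_assoc] at telescope
  rw [← telescope, smul_inv_smul₀ l_ne_zero, telescope]

theorem commute_eigenspaceSum {y z : A} (h : Commute z y) (l : K) (n : ℕ) :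
    Commute z (eigenspaceSum y l n) :=
  Commute.sum_right _ _ _ fun k _ ↦ (h.smul_right l⁻¹).pow_right k

theorem pow_smul_eq {y : A} {l : K} {m : M} (h : y • m = l • m) (n : ℕ) :
    y ^ n • m = l ^ n • m := by
  induction n with
  | zero => simp only [pow_zero, one_smul]
  | succ n ih => rw [pow_succ, mul_smul, h, smul_algebra_smul_comm, ih, smul_smul, pow_succ']

theorem pow_eq_one_of_smul_eq {y : A} {l : K} {m : M} (hm : m ≠ 0) (h : y • m = l • m) {n : ℕ}
    (hy : y ^ n = 1) : l ^ n = 1 := by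
  have : (l ^ n - 1) • m = 0 := by
    rw [sub_smul, ← pow_smul_eq h, hy, one_smul, one_smul, sub_self]
  exact sub_eq_zero.1 ((smul_eq_zero.1 this).resolve_right hm)

theorem eigenspaceSum_smul {y : A} {l : K} {m : M} (hl : l ≠ 0) (h : y • m = l • m) (n : ℕ) :
    eigenspaceSum y l n • m = (n : K) • m := by
  have fixed : (l⁻¹ • y) • m = (1 : K) • m := by rw [smul_assoc, h, inv_smul_smul₀ hl, one_smul]
  simp only [eigenspaceSum, Finset.sum_smul, pow_smul_eq fixed, one_pow, one_smul,
    Finset.sum_const, Finset.card_range, Nat.cast_smul_eq_nsmul]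

end Eigenvectors

section HighestWeight

open Module MulOpposite

variable {K A M N : Type*} [Field K] [Ring A] [Algebra K A]
  [AddCommGroup M] [Module K M] [Module A M] [IsScalarTower K A M]
  [AddCommGroup N] [Module K N] [Module A N] [IsScalarTower K A N]

attribute [local instance] dualModuleOp

/-- The elements `a`, `c`, `x`, `g` generate `A` and satisfy the relations of the double `D`, from
which `b` and `d` have been eliminated by `b = a²c` and `d = a³`. -/
structure DoubleGenerators (ξ ν : K) (a c x g : A) : Prop where
  sq_eq_neg_one : ξ ^ 2 = -1
  a_mul_c : a * c = ξ • (c * a)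
  c_mul_c : c * c = 0
  a_pow_four : a ^ 4 = 1
  g_pow_four : g ^ 4 = 1
  x_mul_x : x * x = g * g - 1
  g_mul_x : g * x = -(x * g)
  a_mul_g : a * g = g * a
  c_mul_g : c * g = -(g * c)
  a_mul_x : a * x = (ν * ξ) • (a * a * c + g * c) - ξ • (x * a)
  c_mul_x : c * x = (ν * ξ) • (a ^ 3 - g * a) - ξ • (x * c)
  adjoin_eq_top : Algebra.adjoin K {a, c, x, g} = ⊤

namespace DoubleGenerators

variable {ξ ν : K} {a c x g : A}

theorem a_mul_a_mul_c (h : DoubleGenerators ξ ν a c x g) : a * a * c = -(c * a * a) := by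
  calc a * a * c = a * ξ • (c * a) := by rw [mul_assoc, h.a_mul_c]
    _ = ξ • (a * c * a) := by rw [mul_smul_comm, mul_assoc]
    _ = ξ ^ 2 • (c * a * a) := by rw [h.a_mul_c, smul_mul_assoc, smul_smul, pow_two]
    _ = -(c * a * a) := by rw [h.sq_eq_neg_one, neg_one_smul]

theorem adjoin_op_eq_top (h : DoubleGenerators ξ ν a c x g) :
    Algebra.adjoin K {op a, ξ • op c, op x, op g} = ⊤ := by
  have ξ_sq := h.sq_eq_neg_one
  set S := Algebra.adjoin K {op a, ξ • op c, op x, op g}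
  have op_c_mem : op c ∈ S := by
    have : op c = (-ξ) • ξ • op c := by
      rw [smul_smul, neg_mul, ← pow_two, ξ_sq, neg_neg, one_smul]
    exact this ▸ S.smul_mem (Algebra.subset_adjoin (by simp)) _
  rw [eq_top_iff, ← Subalgebra.op_top, ← h.adjoin_eq_top, Subalgebra.op_le_iff,
    Algebra.adjoin_le_iff]
  rintro z (rfl | rfl | rfl | rfl)
  · exact Algebra.subset_adjoin (by simp)
  · exact op_c_mem
  · exact Algebra.subset_adjoin (by simp)
  · exact Algebra.subset_adjoin (by simp)

protected theorem op (h : DoubleGenerators ξ ν a c x g) :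
    DoubleGenerators (-ξ) (-ν) (op a) (ξ • op c) (op x) (op g) where
  sq_eq_neg_one := by rw [neg_sq, h.sq_eq_neg_one]
  a_mul_c := unop_injective <| by
    simp only [unop_mul, unop_smul, unop_op, smul_mul_assoc, mul_smul_comm]
    linear_combination (norm := module) h.sq_eq_neg_one • (a * c) - h.a_mul_c
  c_mul_c := unop_injective <| by
    simp only [unop_mul, unop_smul, unop_op, smul_mul_assoc, mul_smul_comm, h.c_mul_c, smul_zero,
      unop_zero]
  a_pow_four := unop_injective h.a_pow_four
  g_pow_four := unop_injective h.g_pow_four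
  x_mul_x := unop_injective h.x_mul_x
  g_mul_x := unop_injective (neg_eq_iff_eq_neg.2 h.g_mul_x).symm
  a_mul_g := unop_injective h.a_mul_g.symm
  c_mul_g := unop_injective <| by
    simp only [unop_mul, unop_smul, unop_op, unop_neg, smul_mul_assoc, mul_smul_comm, h.c_mul_g,
      smul_neg, neg_neg]
  a_mul_x := unop_injective <| by
    simp only [unop_mul, unop_smul, unop_op, unop_add, unop_sub, smul_mul_assoc, ← mul_assoc]
    linear_combination (norm := module) h.sq_eq_neg_one • (x * a) - ξ • h.a_mul_x
      - (ν * ξ ^ 2) • h.a_mul_a_mul_c - (ν * ξ ^ 2) • h.c_mul_g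
  c_mul_x := unop_injective <| by
    simp only [unop_mul, unop_smul, unop_op, unop_sub, unop_pow, smul_mul_assoc, mul_smul_comm]
    linear_combination (norm := module) h.c_mul_x + (ν * ξ) • h.a_mul_g
      - h.sq_eq_neg_one • (c * x)
  adjoin_eq_top := h.adjoin_op_eq_top

end DoubleGenerators

/-- The vector `m` has weight `(l, u)` under `(a, g)` and is killed by the raising operator `c`. -/
structure IsHighestWeightVector (a c g : A) (l u : K) (m : M) : Prop where
  a_smul : a • m = l • m
  g_smul : g • m = u • m
  c_smul : c • m = 0

/-- The scalar by which `c x` acts on a highest weight vector of weight `(l, u)`. -/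
def raisingCoeff (ξ ν l u : K) : K :=
  ν * ξ * (l ^ 3 - l * u)

theorem raisingCoeff_op {ξ : K} (hξ : ξ ^ 2 = -1) (ν l u : K) :
    raisingCoeff (-ξ) (-ν) (-(ξ * l)) (-u) = ξ * raisingCoeff ξ ν l u := by
  rw [raisingCoeff, raisingCoeff]
  linear_combination (-(ν * ξ ^ 2 * l ^ 3)) * hξ

section Action

variable {ξ ν l u : K} {a c x g : A} {m : M}

namespace DoubleGenerators

variable (h : DoubleGenerators ξ ν a c x g)
include h

theorem commute_a_c_mul_x : Commute a (c * x) := by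
  have cac : c * (a * a * c) = 0 := by
    rw [h.a_mul_a_mul_c, mul_neg, ← mul_assoc, ← mul_assoc, h.c_mul_c, zero_mul, zero_mul, neg_zero]
  have cgc : c * (g * c) = 0 := by
    rw [← mul_assoc, h.c_mul_g, neg_mul, mul_assoc, h.c_mul_c, mul_zero, neg_zero]
  calc a * (c * x) = ξ • (c * (a * x)) := by
        rw [← mul_assoc, h.a_mul_c, smul_mul_assoc, mul_assoc]
    _ = ξ • (c * -(ξ • (x * a))) := by
        rw [h.a_mul_x, mul_sub, mul_smul_comm, mul_add, cac, cgc, add_zero, smul_zero, zero_sub,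
          mul_neg]
    _ = -(ξ ^ 2 • (c * x * a)) := by
        rw [mul_neg, mul_smul_comm, smul_neg, smul_smul, ← pow_two, mul_assoc]
    _ = c * x * a := by rw [h.sq_eq_neg_one, neg_one_smul, neg_neg]

theorem commute_g_c_mul_x : Commute g (c * x) := by
  calc g * (c * x) = -(c * (g * x)) := by
        rw [← mul_assoc, ← mul_assoc, ← neg_mul, neg_eq_iff_eq_neg.2 h.c_mul_g]
    _ = c * x * g := by rw [h.g_mul_x, mul_neg, neg_neg, mul_assoc]

theorem isHighestWeightVector_c_mul_x_smul (ha : a • m = l • m) (hg : g • m = u • m) :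
    IsHighestWeightVector a c g l u ((c * x) • m) where
  a_smul := by rw [← mul_smul, h.commute_a_c_mul_x.eq, mul_smul, ha, smul_algebra_smul_comm]
  g_smul := by rw [← mul_smul, h.commute_g_c_mul_x.eq, mul_smul, hg, smul_algebra_smul_comm]
  c_smul := by rw [← mul_smul, ← mul_assoc, h.c_mul_c, zero_mul, zero_smul]

end DoubleGenerators

namespace IsHighestWeightVector

variable (hm : IsHighestWeightVector a c g l u m) (h : DoubleGenerators ξ ν a c x g)
include hm h

theorem a_smul_x_smul : a • x • m = (-(ξ * l)) • x • m := by
  have killed : (a * a * c + g * c) • m = 0 := by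
    rw [← add_mul, mul_smul, hm.c_smul, smul_zero]
  rw [← mul_smul, h.a_mul_x, sub_smul, smul_assoc, smul_assoc, killed, smul_zero, zero_sub,
    mul_smul, hm.a_smul, smul_algebra_smul_comm, smul_smul, neg_smul]

theorem g_smul_x_smul : g • x • m = (-u) • x • m := by
  rw [← mul_smul, h.g_mul_x, neg_smul, mul_smul, hm.g_smul, smul_algebra_smul_comm, neg_smul]

theorem x_smul_x_smul : x • x • m = (u ^ 2 - 1) • m := by
  rw [← mul_smul, h.x_mul_x, sub_smul, ← pow_two, pow_smul_eq hm.g_smul, one_smul, sub_smul,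
    one_smul]

theorem c_smul_x_smul : c • x • m = raisingCoeff ξ ν l u • m := by
  have scaled : (a ^ 3 - g * a) • m = (l ^ 3 - l * u) • m := by
    rw [sub_smul, mul_smul, pow_smul_eq hm.a_smul, hm.a_smul, smul_algebra_smul_comm, hm.g_smul,
      smul_smul, sub_smul]
  rw [← mul_smul, h.c_mul_x, sub_smul, smul_assoc, smul_assoc, scaled, mul_smul x,
    hm.c_smul, smul_zero, smul_zero, sub_zero, smul_smul, raisingCoeff]

theorem linearIndependent (hm0 : m ≠ 0) (hκ : raisingCoeff ξ ν l u ≠ 0) :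
    LinearIndependent K ![m, x • m] := by
  refine LinearIndependent.pair_iff.2 fun s t hst ↦ ?_
  have c_smul_eq : (t * raisingCoeff ξ ν l u) • m = 0 := by
    have := congrArg (c • ·) hst
    rwa [smul_zero, smul_add, smul_algebra_smul_comm, smul_algebra_smul_comm, hm.c_smul,
      hm.c_smul_x_smul h, smul_zero, zero_add, smul_smul] at this
  have t_eq_zero : t = 0 := by simpa [hm0, hκ] using c_smul_eq
  rw [t_eq_zero, zero_smul, add_zero] at hst
  exact ⟨(smul_eq_zero.1 hst).resolve_right hm0, t_eq_zero⟩

theorem exists_basis (hM : finrank K M = 2) (hm0 : m ≠ 0) (hκ : raisingCoeff ξ ν l u ≠ 0) :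
    ∃ B : Basis (Fin 2) K M, B 0 = m ∧ B 1 = x • m := by
  have lin := hm.linearIndependent h hm0 hκ
  refine ⟨basisOfLinearIndependentOfCardEqFinrank lin (by rw [hM, Fintype.card_fin]), ?_, ?_⟩ <;>
    rw [coe_basisOfLinearIndependentOfCardEqFinrank] <;> rfl

theorem linearMap_ext {P : Type*} [AddCommGroup P] [Module K P] (hM : finrank K M = 2)
    (hm0 : m ≠ 0) (hκ : raisingCoeff ξ ν l u ≠ 0) {F G : M →ₗ[K] P} (h0 : F m = G m)
    (h1 : F (x • m) = G (x • m)) : F = G := by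
  obtain ⟨B, hB0, hB1⟩ := hm.exists_basis h hM hm0 hκ
  refine B.ext fun k ↦ ?_
  match k with
  | 0 => rwa [hB0]
  | 1 => rwa [hB1]

theorem exists_linearMap_apply_eq (hM : finrank K M = 2) (hm0 : m ≠ 0)
    (hκ : raisingCoeff ξ ν l u ≠ 0) {n : N} (hn : IsHighestWeightVector a c g l u n) :
    ∃ F : M →ₗ[A] N, F m = n := by
  obtain ⟨B, hB0, hB1⟩ := hm.exists_basis h hM hm0 hκ
  let F : M →ₗ[K] N := B.constr K ![n, x • n]
  have F_m : F m = n := by rw [← hB0]; exact B.constr_basis ..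
  have F_x_m : F (x • m) = x • n := by rw [← hB1]; exact B.constr_basis ..
  have F_smul (z : A) (h0 : F (z • m) = z • n) (h1 : F (z • x • m) = z • x • n) (v : M) :
      F (z • v) = z • F v := by
    have : F ∘ₗ Algebra.lsmul K K M z = Algebra.lsmul K K N z ∘ₗ F :=
      hm.linearMap_ext h hM hm0 hκ (h0.trans (congrArg (z • ·) F_m.symm))
        (h1.trans (congrArg (z • ·) F_x_m.symm))
    exact LinearMap.congr_fun this v
  refine ⟨{ F with map_smul' := map_smul_of_adjoin_eq_top h.adjoin_eq_top F ?_ }, F_m⟩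
  rintro z (rfl | rfl | rfl | rfl)
  · exact F_smul _ (by rw [hm.a_smul, hn.a_smul, map_smul, F_m])
      (by rw [hm.a_smul_x_smul h, hn.a_smul_x_smul h, map_smul, F_x_m])
  · exact F_smul _ (by rw [hm.c_smul, hn.c_smul, map_zero])
      (by rw [hm.c_smul_x_smul h, hn.c_smul_x_smul h, map_smul, F_m])
  · exact F_smul _ F_x_m (by rw [hm.x_smul_x_smul h, hn.x_smul_x_smul h, map_smul, F_m])
  · exact F_smul _ (by rw [hm.g_smul, hn.g_smul, map_smul, F_m])
      (by rw [hm.g_smul_x_smul h, hn.g_smul_x_smul h, map_smul, F_x_m])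

theorem exists_isHighestWeightVector_smul_eq (hm0 : m ≠ 0) :
    ∃ w : A, IsHighestWeightVector a c g l u w ∧ w • m = (16 * raisingCoeff ξ ν l u) • m := by
  have l_pow : l ^ 4 = 1 := pow_eq_one_of_smul_eq hm0 hm.a_smul h.a_pow_four
  have u_pow : u ^ 4 = 1 := pow_eq_one_of_smul_eq hm0 hm.g_smul h.g_pow_four
  -- Up to the factor `16`, `e` is the projector onto the weight `(l, u)`.
  let e := eigenspaceSum a l 4 * eigenspaceSum g u 4
  have a_mul_e : a * e = l • e := by
    rw [← mul_assoc, mul_eigenspaceSum four_ne_zero h.a_pow_four l_pow, smul_mul_assoc]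
  have g_mul_e : g * e = u • e := by
    rw [(commute_eigenspaceSum h.a_mul_g.symm l 4).left_comm,
      mul_eigenspaceSum four_ne_zero h.g_pow_four u_pow, mul_smul_comm]
  have e_smul : e • m = (16 : K) • m := by
    have l_ne_zero : l ≠ 0 := (IsUnit.of_pow_eq_one l_pow four_ne_zero).ne_zero
    have u_ne_zero : u ≠ 0 := (IsUnit.of_pow_eq_one u_pow four_ne_zero).ne_zero
    rw [mul_smul, eigenspaceSum_smul u_ne_zero hm.g_smul, smul_algebra_smul_comm,
      eigenspaceSum_smul l_ne_zero hm.a_smul, smul_smul]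
    norm_num
  refine ⟨c * x * e, h.isHighestWeightVector_c_mul_x_smul a_mul_e g_mul_e, ?_⟩
  rw [mul_smul, e_smul, smul_algebra_smul_comm, mul_smul, hm.c_smul_x_smul h, smul_smul]

theorem projective (h2 : (2 : K) ≠ 0) (hM : finrank K M = 2) (hm0 : m ≠ 0)
    (hκ : raisingCoeff ξ ν l u ≠ 0) : Projective A M := by
  obtain ⟨w, hw, w_smul⟩ := hm.exists_isHighestWeightVector_smul_eq h hm0
  obtain ⟨F, F_m⟩ := hm.exists_linearMap_apply_eq h hM hm0 hκ hw
  have κ_ne_zero : 16 * raisingCoeff ξ ν l u ≠ 0 :=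
    mul_ne_zero (by convert pow_ne_zero 4 h2; norm_num) hκ
  set κ := 16 * raisingCoeff ξ ν l u
  let G : A →ₗ[A] M := LinearMap.toSpanSingleton A M (κ⁻¹ • m)
  have G_F_m : G (F m) = m := by
    rw [F_m, LinearMap.toSpanSingleton_apply, smul_algebra_smul_comm, w_smul,
      inv_smul_smul₀ κ_ne_zero]
  refine .of_split F G (LinearMap.restrictScalars_injective K ?_)
  refine hm.linearMap_ext h hM hm0 hκ G_F_m ?_
  change G (F (x • m)) = x • m
  rw [map_smul, map_smul, G_F_m]

theorem exists_dual_isHighestWeightVector (hM : finrank K M = 2) (hm0 : m ≠ 0)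
    (hκ : raisingCoeff ξ ν l u ≠ 0) :
    ∃ φ : Dual K M, φ ≠ 0 ∧
      IsHighestWeightVector (op a) (ξ • op c) (op g) (-(ξ * l)) (-u) φ := by
  obtain ⟨B, hB0, hB1⟩ := hm.exists_basis h hM hm0 hκ
  have coord_m : B.coord 1 m = 0 := by rw [← hB0, B.coord_apply, B.repr_self]; simp
  have coord_x_m : B.coord 1 (x • m) = 1 := by rw [← hB1, B.coord_apply, B.repr_self]; simp
  have eq_of_eq {φ ψ : Dual K M} := hm.linearMap_ext h hM hm0 hκ (F := φ) (G := ψ)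
  refine ⟨B.coord 1, fun h0 ↦ ?_, eq_of_eq ?_ ?_, eq_of_eq ?_ ?_, eq_of_eq ?_ ?_⟩
  · simp [h0] at coord_x_m
  all_goals simp only [op_smul_dual_apply, LinearMap.smul_apply, ← op_smul, smul_assoc,
    LinearMap.zero_apply, hm.a_smul, hm.g_smul, hm.c_smul, hm.a_smul_x_smul h, hm.g_smul_x_smul h,
    hm.c_smul_x_smul h, map_smul, coord_m, coord_x_m, smul_zero, map_zero]

theorem injective (h2 : (2 : K) ≠ 0) (hM : finrank K M = 2) (hm0 : m ≠ 0)
    (hκ : raisingCoeff ξ ν l u ≠ 0) : Module.Injective A M := by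
  have : FiniteDimensional K M := .of_finrank_pos (by rw [hM]; exact two_pos)
  have := isScalarTower_op_dual (K := K) (A := A) (M := M)
  obtain ⟨φ, hφ0, hφ⟩ := hm.exists_dual_isHighestWeightVector h hM hm0 hκ
  have ξ_ne_zero : ξ ≠ 0 := by rintro rfl; simpa using h.sq_eq_neg_one
  have hκ' : raisingCoeff (-ξ) (-ν) (-(ξ * l)) (-u) ≠ 0 := by
    rw [raisingCoeff_op h.sq_eq_neg_one]
    exact mul_ne_zero ξ_ne_zero hκ
  have := hφ.projective h.op h2 (by rw [Subspace.dual_finrank_eq, hM]) hφ0 hκ'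
  exact injective_of_projective_dual K A M

end IsHighestWeightVector

end Action

end HighestWeight

section Double

open Module

theorem gB_eq_gA_mul_gA_mul_gC : gB 𝕜 ξ ν = gA 𝕜 ξ ν * gA 𝕜 ξ ν * gC 𝕜 ξ ν := by
  simpa only [map_mul, gA, gB, gC] using (RingQuot.mkAlgHom_rel 𝕜 (DRel.aac (ξ := ξ) (ν := ν))).symm

theorem gA_pow_four : gA 𝕜 ξ ν ^ 4 = 1 := by
  simpa only [map_pow, map_one, gA] using RingQuot.mkAlgHom_rel 𝕜 (DRel.afour (ξ := ξ) (ν := ν))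

theorem gD_eq_gA_pow_three : gD 𝕜 ξ ν = gA 𝕜 ξ ν ^ 3 := by
  have a_mul_d : gA 𝕜 ξ ν * gD 𝕜 ξ ν = 1 := by
    simpa only [map_mul, map_one, gA, gD] using
      RingQuot.mkAlgHom_rel 𝕜 (DRel.adone (ξ := ξ) (ν := ν))
  rw [← one_mul (gD 𝕜 ξ ν), ← gA_pow_four, pow_succ, mul_assoc, a_mul_d, mul_one]

theorem adjoin_gA_gC_gX_gG_eq_top :
    Algebra.adjoin 𝕜 {gA 𝕜 ξ ν, gC 𝕜 ξ ν, gX 𝕜 ξ ν, gG 𝕜 ξ ν} = ⊤ := by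
  set S := Algebra.adjoin 𝕜 {gA 𝕜 ξ ν, gC 𝕜 ξ ν, gX 𝕜 ξ ν, gG 𝕜 ξ ν}
  have a_mem : gA 𝕜 ξ ν ∈ S := Algebra.subset_adjoin (by simp)
  have c_mem : gC 𝕜 ξ ν ∈ S := Algebra.subset_adjoin (by simp)
  have b_mem : gB 𝕜 ξ ν ∈ S := by
    rw [gB_eq_gA_mul_gA_mul_gC]; exact mul_mem (mul_mem a_mem a_mem) c_mem
  have d_mem : gD 𝕜 ξ ν ∈ S := by rw [gD_eq_gA_pow_three]; exact pow_mem a_mem 3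
  rw [eq_top_iff, ← (AlgHom.range_eq_top _).2 (RingQuot.mkAlgHom_surjective 𝕜 (DRel 𝕜 ξ ν)),
    ← Algebra.map_top, ← FreeAlgebra.adjoin_range_ι, AlgHom.map_adjoin, Algebra.adjoin_le_iff]
  rintro _ ⟨_, ⟨y, rfl⟩, rfl⟩
  cases y with
  | a => exact a_mem
  | b => exact b_mem
  | c => exact c_mem
  | d => exact d_mem
  | x => exact Algebra.subset_adjoin (by simp [gX])
  | g => exact Algebra.subset_adjoin (by simp [gG])

theorem doubleGenerators_gA_gC_gX_gG (hξ : ξ ^ 2 = -1) :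
    DoubleGenerators ξ ν (gA 𝕜 ξ ν) (gC 𝕜 ξ ν) (gX 𝕜 ξ ν) (gG 𝕜 ξ ν) :=
  have rel {p q} (hpq : DRel 𝕜 ξ ν p q) := RingQuot.mkAlgHom_rel 𝕜 hpq
  { sq_eq_neg_one := hξ
    a_mul_c := by simpa only [map_mul, map_smul, gA, gC] using rel .ac
    c_mul_c := by simpa only [map_mul, map_zero, gC] using rel .csq
    a_pow_four := gA_pow_four
    g_pow_four := by simpa only [map_pow, map_one, gG] using rel .gfour
    x_mul_x := by simpa only [map_mul, map_sub, map_one, gX, gG] using rel .xsq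
    g_mul_x := by simpa only [map_mul, map_neg, gG, gX] using rel .gx
    a_mul_g := by simpa only [map_mul, gA, gG] using rel .ag
    c_mul_g := by simpa only [map_mul, map_neg, gC, gG] using rel .cg
    a_mul_x := by
      rw [← gB_eq_gA_mul_gA_mul_gC]
      simpa only [map_mul, map_sub, map_smul, map_add, gA, gB, gC, gX, gG] using rel .axr
    c_mul_x := by
      rw [← gD_eq_gA_pow_three]
      simpa only [map_mul, map_sub, map_smul, gA, gC, gD, gX, gG] using rel .cxr
    adjoin_eq_top := adjoin_gA_gC_gX_gG_eq_top }

theorem sq_eq_neg_one_of_isPrimitiveRoot_four_s16 (hξ : IsPrimitiveRoot ξ 4) : ξ ^ 2 = -1 :=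
  (hξ.pow four_pos (by norm_num : 4 = 2 * 2)).eq_neg_one_of_two_right

theorem two_ne_zero_of_isPrimitiveRoot_four_s16 (hξ : IsPrimitiveRoot ξ 4) : (2 : 𝕜) ≠ 0 := by
  intro h2
  refine hξ.pow_ne_one_of_pos_of_lt two_ne_zero (by norm_num) ?_
  linear_combination sq_eq_neg_one_of_isPrimitiveRoot_four_s16 hξ - h2

theorem raisingCoeff_pow_ne_zero (hξ : IsPrimitiveRoot ξ 4) (hν : ν ≠ 0) {i j : ZMod 4}
    (hij : 2 * i ≠ j) : raisingCoeff ξ ν (ξ ^ i.val) (ξ ^ j.val) ≠ 0 := by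
  refine mul_ne_zero (mul_ne_zero hν (hξ.ne_zero four_ne_zero)) (sub_ne_zero.2 fun h ↦ hij ?_)
  rw [← pow_mul, ← pow_add, (hξ.isOfFinOrder four_ne_zero).pow_eq_pow_iff_modEq,
    ← hξ.eq_orderOf, ← ZMod.natCast_eq_natCast_iff] at h
  push_cast at h
  rw [ZMod.natCast_zmod_val, ZMod.natCast_zmod_val] at h
  linear_combination h

theorem isScalarTower_compHom (ρ : DAlg 𝕜 ξ ν →ₐ[𝕜] End 𝕜 V) :
    letI := Module.compHom V ρ.toRingHom
    IsScalarTower 𝕜 (DAlg 𝕜 ξ ν) V := by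
  let _ := Module.compHom V ρ.toRingHom
  exact .of_algebraMap_smul fun r v ↦ LinearMap.congr_fun (ρ.commutes r) v

namespace VijOn

variable {ρ : DAlg 𝕜 ξ ν →ₐ[𝕜] End 𝕜 V} {i j : ZMod 4}

theorem isHighestWeightVector {e₁ e₂ : V} (hρ : VijOn ρ i j e₁ e₂) :
    letI := Module.compHom V ρ.toRingHom
    IsHighestWeightVector (gA 𝕜 ξ ν) (gC 𝕜 ξ ν) (gG 𝕜 ξ ν) (ξ ^ i.val) (ξ ^ j.val) e₁ := by
  obtain ⟨a_e₁, -, -, -, c_e₁, -, -, -, g_e₁, -⟩ := hρ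
  let _ := Module.compHom V ρ.toRingHom
  exact ⟨a_e₁, g_e₁, c_e₁⟩

variable {b : Basis (Fin 2) 𝕜 V} (hρ : VijOn ρ i j (b 0) (b 1)) (hξ : IsPrimitiveRoot ξ 4)
  (hν : ν ≠ 0) (hij : 2 * i ≠ j)
include hρ hξ hν hij

theorem projective_repModuleCat : CategoryTheory.Projective (repModuleCat ρ) := by
  let _ := Module.compHom V ρ.toRingHom
  have := isScalarTower_compHom ρ
  refine (IsProjective.iff_projective (R := DAlg 𝕜 ξ ν) V).1 ?_
  exact hρ.isHighestWeightVector.projective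
    (doubleGenerators_gA_gC_gX_gG (sq_eq_neg_one_of_isPrimitiveRoot_four_s16 hξ))
    (two_ne_zero_of_isPrimitiveRoot_four_s16 hξ) (finrank_eq_card_basis b) (b.ne_zero 0)
    (raisingCoeff_pow_ne_zero hξ hν hij)

theorem injective_repModuleCat : CategoryTheory.Injective (repModuleCat ρ) := by
  let _ := Module.compHom V ρ.toRingHom
  have := isScalarTower_compHom ρ
  refine (Module.injective_iff_injective_object (DAlg 𝕜 ξ ν) V).1 ?_
  exact hρ.isHighestWeightVector.injective
    (doubleGenerators_gA_gC_gX_gG (sq_eq_neg_one_of_isPrimitiveRoot_four_s16 hξ))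
    (two_ne_zero_of_isPrimitiveRoot_four_s16 hξ) (finrank_eq_card_basis b) (b.ne_zero 0)
    (raisingCoeff_pow_ne_zero hξ hν hij)

end VijOn

end Double

open CategoryTheory in
theorem stmt_16_general (hξ : IsPrimitiveRoot ξ 4) (hν : ν ≠ 0) {i j : ZMod 4} (hij : 2 * i ≠ j)
    {ρ : DAlg 𝕜 ξ ν →ₐ[𝕜] Module.End 𝕜 V} {b : Module.Basis (Fin 2) 𝕜 V}
    (hρ : VijOn ρ i j (b 0) (b 1)) (Y : ModuleCat (DAlg 𝕜 ξ ν)) (n : ℕ) :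
    Subsingleton (((Ext 𝕜 (ModuleCat (DAlg 𝕜 ξ ν)) (n + 1)).obj
        (Opposite.op (repModuleCat ρ))).obj Y) ∧
    Subsingleton (((Ext 𝕜 (ModuleCat (DAlg 𝕜 ξ ν)) (n + 1)).obj
        (Opposite.op Y)).obj (repModuleCat ρ)) := by
  have := hρ.projective_repModuleCat hξ hν hij
  have := hρ.injective_repModuleCat hξ hν hij
  exact ⟨ModuleCat.subsingleton_of_isZero (isZero_Ext_succ_of_projective _ _ n),
    ModuleCat.subsingleton_of_isZero (isZero_Ext_succ_of_injective _ _ n)⟩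

open CategoryTheory in
/-- For all `(i,j), (k,ℓ) ∈ Λ` and all `m ∈ ℤ/4`, the Ext groups
`Ext¹_D(V_{i,j}, V_{k,ℓ})`, `Ext¹_D(V_{i,j}, 𝕜_{χ^m})` and `Ext¹_D(𝕜_{χ^m}, V_{i,j})`
all vanish. -/
theorem stmt_16 (𝕜 : Type) [Field 𝕜] [IsAlgClosed 𝕜] [CharZero 𝕜]
    (ξ ν : 𝕜) (hξ : IsPrimitiveRoot ξ 4) (hν : ν ^ 2 = 2)
    (i j i' j' : ZMod 4) (hij : 2 * i ≠ j) (hij' : 2 * i' ≠ j') (m : ZMod 4)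
    (ρ ρ' : DAlg 𝕜 ξ ν →ₐ[𝕜] Module.End 𝕜 (𝕜 × 𝕜))
    (hρ : VijOn ρ i j ((1 : 𝕜), (0 : 𝕜)) ((0 : 𝕜), (1 : 𝕜)))
    (hρ' : VijOn ρ' i' j' ((1 : 𝕜), (0 : 𝕜)) ((0 : 𝕜), (1 : 𝕜)))
    (f : DAlg 𝕜 ξ ν →ₐ[𝕜] 𝕜) (hf : IsChi 𝕜 ξ ν f m) :
    Subsingleton (((Ext 𝕜 (ModuleCat (DAlg 𝕜 ξ ν)) 1).obj
        (Opposite.op (repModuleCat ρ))).obj (repModuleCat ρ')) ∧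
    Subsingleton (((Ext 𝕜 (ModuleCat (DAlg 𝕜 ξ ν)) 1).obj
        (Opposite.op (repModuleCat ρ))).obj (chiModuleCat 𝕜 ξ ν f)) ∧
    Subsingleton (((Ext 𝕜 (ModuleCat (DAlg 𝕜 ξ ν)) 1).obj
        (Opposite.op (chiModuleCat 𝕜 ξ ν f))).obj (repModuleCat ρ')) := by
  have hν₀ : ν ≠ 0 := by rintro rfl; simp at hν
  rw [← Module.Basis.finTwoProd_zero, ← Module.Basis.finTwoProd_one] at hρ hρ'
  exact ⟨(stmt_16_general hξ hν₀ hij hρ _ 0).1, (stmt_16_general hξ hν₀ hij hρ _ 0).1,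
    (stmt_16_general hξ hν₀ hij' hρ' _ 0).2⟩
end
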